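/- Let ψ ∈ {0,1}^n, 1 ≤ i ≤ n, and v ∈ ℝ^n with v_j ∈ [0,∞) for all j ≠ i. Then ω*_ψ(X;v), considered as a function of v_i, is non-increasing, and for every ε > 0 its difference Δ_i ω*_ψ(X;v) := ω*_ψ(X;v+e_i) − ω*_ψ(X;v) satisfies, in the interval 1 ≤ v_i ≤ √(Y_i): |Δ_i ω*_ψ(X;v)| ≪ X^{1+ε}·X^{1/2} if d_i = 1, and |Δ_i ω*_ψ(X;v)| ≪ X^{1+ε}·v_i^{2/d_i − 1} if d_i ≥ 2, with the implied constant independent of v and X. -/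

import Mathlib

/-!
Enlarging `v_i` shrinks the region whose volume is `ω*_ψ`, which gives monotonicity. When `v_i` grows
by one, with `B = √(Y_i) 𝔑𝔴_i`, every point that is lost lies in the dilated box `X^{1/m} D`,
satisfies `|F_i(s_w, t_w)|_w ≥ 1` at all places and lies in the shell
`v_i B ≤ 𝔑(F_i(s,t)) ≤ v_i B + B`. So it suffices to bound the volume of a shell
`a ≤ 𝔑(F(s,t)) ≤ b` in a truncated box of size `R` by `≪ R^{m e} (b - a) a^{κ-1}`, where for
`d = deg F` one has `κ = 1`, `e = 1 + η` if `d = 1` and `κ = 2/d`, `e = d η` if `d ≥ 2`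
(`global_shell_bound`). With `R ≍ X^{1/m}`, `a = v_i B`, `b - a = B ≍ X^{d/2}` this is the claim.

The norm `𝔑(F)` is the product over the places of the functions `y_w = |F_w|_w^{m_w}`. If each `y_w`
has a bounded moment `∫ y_w^{-κ}` (`MomentBound`) and satisfies the shell estimate with exponent `κ`
(`ShellBound`), then so does a product of them in independent variables: slice at a fixed value of
all but one of the factors, apply the shell estimate of the remaining factor with rescaled endpoints,
and integrate the resulting power `-κ` of the fixed factors (`ShellBound.prod_moment`).

The two bounds at one place (`local_bounds`) hold for the following reasons. If `d = 1`, then `F_w`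
is a coordinate after a linear change of variables. If `d ≥ 2`, the substitution `s = t x` turns
`|F(s,t)|` into `|t|^d |f(x)|`, where `f(x) = F(x, 1)`, and the integral over `t` is explicit
(`lintegral_annulus`); what remains is `∫ |f(x)|^{-m_w (κ - η)} dx`. This is finite
(`lintegral_poly_lt_top`): it converges at infinity because `f` has degree `d` with
`d (κ - η) = 2 - d η > 1`, and near the zeros of `f` because these are simple and `κ - η < 1`. The
zeros are simple because `F` is irreducible over `K`, hence so is `f` (`irreducible_dehom`), and `K` is
perfect. The exponent `κ` itself is critical (for `d = 2` near the zeros of `f`, and in general for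
the integral over `t` of the moment), and the truncation `1 ≤ |F_w| ≪ R^d` is what allows `κ` to be
traded for `κ - η` at the price of a small power of `R`.
-/

open NumberField UniqueFactorizationMonoid Classical MvPolynomial Pointwise

noncomputable section

variable (K : Type*) [Field K] [NumberField K]

/-- `K_∞ = K ⊗_ℚ ℝ`, identified with the mixed space `ℝ^{r₁} × ℂ^{r₂}`. -/
abbrev KInfty := NumberField.mixedEmbedding.mixedSpace K

/-- The quadratic residue (Legendre) symbol of `a ∈ O_K` modulo a prime ideal `𝔭`. -/
def legendreSymK (a : 𝓞 K) (p : Ideal (𝓞 K)) : ℤ :=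
  if a ∈ p then 0 else if ∃ b : 𝓞 K, b ^ 2 - a ∈ p then 1 else -1

/-- The Jacobi symbol `(a/𝔟)` of `K`: the product of Legendre symbols over the prime
factorization of `𝔟` (with multiplicity). -/
def jacobiSymK (a : 𝓞 K) (b : Ideal (𝓞 K)) : ℤ :=
  ((normalizedFactors b).map (fun p => legendreSymK K a p)).prod

/-- `𝔞^♭`: the product of `𝔭^{v_𝔭(𝔞)}` over the prime ideals `𝔭 ∤ 𝔴`. -/
def flatPart (w a : Ideal (𝓞 K)) : Ideal (𝓞 K) :=
  ((normalizedFactors a).filter (fun p => ¬ p ∣ w)).prod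

/-- `v_𝔭(𝔞)`: the exponent of the prime ideal `𝔭` in `𝔞`. -/
def vP (p a : Ideal (𝓞 K)) : ℕ := Multiset.count p (normalizedFactors a)

/-- The class `Z_K`: multiplicative functions on nonzero ideals, with values in `(−1,∞)`,
satisfying `f(𝔭) ≪_f 1/𝔑𝔭` for all primes `𝔭` and supported on squarefree ideals. -/
def MemZK (f : Ideal (𝓞 K) → ℝ) : Prop :=
  f ⊤ = 1 ∧
  (∀ a b : Ideal (𝓞 K), a ≠ ⊥ → b ≠ ⊥ → a ⊔ b = ⊤ → f (a * b) = f a * f b) ∧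
  (∀ a : Ideal (𝓞 K), a ≠ ⊥ → -1 < f a) ∧
  (∃ c : ℝ, 0 < c ∧ ∀ p : Ideal (𝓞 K), p.IsPrime → p ≠ ⊥ →
    |f p| ≤ c / (Ideal.absNorm p : ℝ)) ∧
  (∀ a : Ideal (𝓞 K), a ≠ ⊥ → ¬ Squarefree a → f a = 0)

/-- `1_f(𝔞) = (1 ∗ f)(𝔞) = ∏_{𝔭 ∣ 𝔞} (1 + f(𝔭))` for `f` supported on squarefree ideals. -/
def oneStar (f : Ideal (𝓞 K) → ℝ) (a : Ideal (𝓞 K)) : ℝ :=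
  ∏ p ∈ (normalizedFactors a).toFinset, (1 + f p)

/-- Evaluation `F(s,t)` of a binary form. -/
def evalForm (F : MvPolynomial (Fin 2) (𝓞 K)) (s t : 𝓞 K) : 𝓞 K :=
  MvPolynomial.eval ![s, t] F

/-- A system of binary forms `𝔉 = {(F_i, G_i) : 1 ≤ i ≤ n}`: each `F_i` is a binary form over
`O_K`, irreducible over `K`, not dividing `G_i` in `K[s,t]`; the `F_i` are pairwise coprime
over `K` (no common non-unit factor); and each `G_i` has even degree. -/
structure SystemOfForms (n : ℕ) where
  F : Fin n → MvPolynomial (Fin 2) (𝓞 K)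
  G : Fin n → MvPolynomial (Fin 2) (𝓞 K)
  dF : Fin n → ℕ
  dG : Fin n → ℕ
  F_homog : ∀ i, (F i).IsHomogeneous (dF i)
  G_homog : ∀ i, (G i).IsHomogeneous (dG i)
  dF_pos : ∀ i, 0 < dF i
  F_irred : ∀ i, Irreducible ((F i).map (algebraMap (𝓞 K) K))
  F_not_dvd_G : ∀ i, ¬ ((F i).map (algebraMap (𝓞 K) K) ∣ (G i).map (algebraMap (𝓞 K) K))
  F_coprime : ∀ i j, i ≠ j → ∀ d : MvPolynomial (Fin 2) K,
      d ∣ (F i).map (algebraMap (𝓞 K) K) → d ∣ (F j).map (algebraMap (𝓞 K) K) → IsUnit d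
  dG_even : ∀ i, Even (dG i)

/-- `G_i(𝛉_i)` is a nonzero square in `K(𝛉_i)`: if `F_i` is proportional to `t` then
`𝛉_i = (1,0)` and the condition reads `G_i(1,0) ∈ K^{×2}`; otherwise `𝛉_i = (θ_i,1)` for a
root `θ_i` of `F_i(x,1)` and the condition reads `G_i(θ_i,1) ∈ K(θ_i)^{×2}`. -/
def SystemOfForms.SquareAt {n : ℕ} (S : SystemOfForms K n) (i : Fin n) : Prop :=
  if ∃ c : K, (S.F i).map (algebraMap (𝓞 K) K) = MvPolynomial.C c * MvPolynomial.X 1 then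
    ∃ c : K, c ≠ 0 ∧
      c ^ 2 = MvPolynomial.eval ![(1 : K), 0] ((S.G i).map (algebraMap (𝓞 K) K))
  else
    ∃ θ : AlgebraicClosure K,
      MvPolynomial.eval ![θ, 1]
        (((S.F i).map (algebraMap (𝓞 K) K)).map (algebraMap K (AlgebraicClosure K))) = 0 ∧
      ∃ y : AlgebraicClosure K, y ∈ IntermediateField.adjoin K {θ} ∧ y ≠ 0 ∧
        y ^ 2 = MvPolynomial.eval ![θ, 1]
          (((S.G i).map (algebraMap (𝓞 K) K)).map (algebraMap K (AlgebraicClosure K)))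

/-- The rank `ρ(𝔉) = #{i : G_i(𝛉_i) ∈ K(𝛉_i)^{×2}}`. -/
def SystemOfForms.rank {n : ℕ} (S : SystemOfForms K n) : ℕ :=
  (Finset.univ.filter (fun i => SystemOfForms.SquareAt K S i)).card

/-- The complexity `c(𝔉) = ∑_{i : G_i(𝛉_i) ∉ K(𝛉_i)^{×2}} deg F_i`. -/
def SystemOfForms.complexity {n : ℕ} (S : SystemOfForms K n) : ℕ :=
  ∑ i ∈ Finset.univ.filter (fun i => ¬ SystemOfForms.SquareAt K S i), S.dF i

/-- Data of a region `D = ∏_{v ∣ ∞} D_v` where each `D_v ⊆ K_v²` is a compact ball of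
positive radius. -/
structure BoxData where
  ctrR : {w : InfinitePlace K // w.IsReal} → ℝ × ℝ
  radR : {w : InfinitePlace K // w.IsReal} → ℝ
  ctrC : {w : InfinitePlace K // w.IsComplex} → ℂ × ℂ
  radC : {w : InfinitePlace K // w.IsComplex} → ℝ
  radR_pos : ∀ w, 0 < radR w
  radC_pos : ∀ w, 0 < radC w

/-- The region `D ⊆ K_∞²` determined by the ball data. -/
def BoxData.D (B : BoxData K) : Set (KInfty K × KInfty K) :=
  {p | (∀ w, Real.sqrt ((p.1.1 w - (B.ctrR w).1) ^ 2 + (p.2.1 w - (B.ctrR w).2) ^ 2)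
          ≤ B.radR w) ∧
       (∀ w, Real.sqrt (‖p.1.2 w - (B.ctrC w).1‖ ^ 2 + ‖p.2.2 w - (B.ctrC w).2‖ ^ 2)
          ≤ B.radC w)}

/-- A triplet `P = (D, (σ,τ), 𝔴)` for the fixed ideal `𝔯`: `D` is a product of compact
balls, `σ O_K + τ O_K = 𝔯`, and `𝔴` is a nonzero ideal divisible by `2𝔯`. -/
structure Triplet (𝔯 : Ideal (𝓞 K)) where
  box : BoxData K
  σ : 𝓞 K
  τ : 𝓞 K
  w : Ideal (𝓞 K)
  hστ : Ideal.span {σ} ⊔ Ideal.span {τ} = 𝔯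
  hw_ne : w ≠ ⊥
  hw_dvd : (Ideal.span {(2 : 𝓞 K)} * 𝔯) ∣ w

/-- The embedding `O_K → K_∞`. -/
def iota (s : 𝓞 K) : KInfty K := mixedEmbedding K (algebraMap (𝓞 K) K s)

/-- `M*(P,X)`: the `𝔯`-primitive points `(s,t) ∈ 𝔯² ∩ X^{1/m}D` with
`(s,t) ≡ (σ,τ) mod 𝔴`. -/
def Mstar {𝔯 : Ideal (𝓞 K)} (P : Triplet K 𝔯) (X : ℝ) : Set (𝓞 K × 𝓞 K) :=
  {p | p.1 ∈ 𝔯 ∧ p.2 ∈ 𝔯 ∧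
    (iota K p.1, iota K p.2) ∈ (X ^ ((1 : ℝ) / (Module.finrank ℚ K))) • P.box.D ∧
    p.1 - P.σ ∈ P.w ∧ p.2 - P.τ ∈ P.w ∧
    Ideal.span {p.1} ⊔ Ideal.span {p.2} = 𝔯}

/-- `𝔉`-admissibility of a triplet `P`. -/
def Admissible {n : ℕ} {𝔯 : Ideal (𝓞 K)} (S : SystemOfForms K n) (P : Triplet K 𝔯) : Prop :=
  (∀ i, evalForm K (S.F i) P.σ P.τ ≠ 0) ∧
  ∀ X : ℝ, 1 ≤ X → ∀ p ∈ Mstar K P X, ∀ i,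
    evalForm K (S.F i) p.1 p.2 ≠ 0 ∧
    jacobiSymK K (evalForm K (S.G i) p.1 p.2)
      (flatPart K P.w (Ideal.span {evalForm K (S.F i) p.1 p.2})) = 1

/-- Strong `𝔉`-admissibility: in addition `F_i(σ,τ) ≢ 0 mod 𝔴` and
`v_𝔭(F_i(s,t)) = v_𝔭(F_i(σ,τ))` for all `𝔭 ∣ 𝔴`, all `i` and all `(s,t) ∈ M*(P,∞)`. -/
def StronglyAdmissible {n : ℕ} {𝔯 : Ideal (𝓞 K)} (S : SystemOfForms K n)
    (P : Triplet K 𝔯) : Prop :=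
  Admissible K S P ∧ (∀ i, evalForm K (S.F i) P.σ P.τ ∉ P.w) ∧
  ∀ X : ℝ, 1 ≤ X → ∀ p ∈ Mstar K P X, ∀ i, ∀ q : Ideal (𝓞 K), q.IsPrime → q ∣ P.w →
    vP K q (Ideal.span {evalForm K (S.F i) p.1 p.2}) =
      vP K q (Ideal.span {evalForm K (S.F i) P.σ P.τ})

/-- The summand
`r(𝔉,f,P;s,t) = ∏_{i=1}^n 1_f(F_i(s,t)^♭) · ∑_{𝔡_i ∣ F_i(s,t)^♭} (G_i(s,t)/𝔡_i)`. -/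
def rFun {n : ℕ} {𝔯 : Ideal (𝓞 K)} (S : SystemOfForms K n) (f : Ideal (𝓞 K) → ℝ)
    (P : Triplet K 𝔯) (p : 𝓞 K × 𝓞 K) : ℝ :=
  ∏ i, (oneStar K f (flatPart K P.w (Ideal.span {evalForm K (S.F i) p.1 p.2})) *
    ∑ᶠ d ∈ {d : Ideal (𝓞 K) |
        d ∣ flatPart K P.w (Ideal.span {evalForm K (S.F i) p.1 p.2})},
      (jacobiSymK K (evalForm K (S.G i) p.1 p.2) d : ℝ))

/-- The generalised divisor sum `D(𝔉,f,P;X) = ∑_{(s,t) ∈ M*(P,X)} r(𝔉,f,P;s,t)`. -/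
def DSum {n : ℕ} {𝔯 : Ideal (𝓞 K)} (S : SystemOfForms K n) (f : Ideal (𝓞 K) → ℝ)
    (P : Triplet K 𝔯) (X : ℝ) : ℝ :=
  ∑ᶠ p ∈ Mstar K P X, rFun K S f P p

end

open NumberField.InfinitePlace MeasureTheory

noncomputable section

variable (K : Type*) [Field K] [NumberField K]

/-- The embedding `O_K → K_w = ℝ` at a real place `w`. -/
def realEmbed (w : {w : InfinitePlace K // w.IsReal}) : 𝓞 K →+* ℝ :=
  (embedding_of_isReal w.2).comp (algebraMap (𝓞 K) K)

/-- The embedding `O_K → K_w = ℂ` at a complex place `w`. -/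
def complexEmbed (w : {w : InfinitePlace K // w.IsComplex}) : 𝓞 K →+* ℂ :=
  (w.1.embedding).comp (algebraMap (𝓞 K) K)

/-- Evaluation of a binary form `F` over `O_K` at the component of `(s,t) ∈ K_∞²` at a
real place `w`. -/
def realEvalForm (F : MvPolynomial (Fin 2) (𝓞 K))
    (w : {w : InfinitePlace K // w.IsReal}) (s t : ℝ) : ℝ :=
  MvPolynomial.eval ![s, t] (F.map (realEmbed K w))

/-- Evaluation of a binary form `F` over `O_K` at the component of `(s,t) ∈ K_∞²` at a
complex place `w`. -/
def complexEvalForm (F : MvPolynomial (Fin 2) (𝓞 K))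
    (w : {w : InfinitePlace K // w.IsComplex}) (s t : ℂ) : ℂ :=
  MvPolynomial.eval ![s, t] (F.map (complexEmbed K w))

/-- Componentwise evaluation `F(s,t) ∈ K_∞` of a binary form at `(s,t) ∈ K_∞²`. -/
def evalAtPlaces (F : MvPolynomial (Fin 2) (𝓞 K)) (s t : KInfty K) : KInfty K :=
  (fun w => realEvalForm K F w (s.1 w) (t.1 w),
   fun w => complexEvalForm K F w (s.2 w) (t.2 w))

/-- The norm at infinity `𝔑(x) = ∏_{v ∣ ∞} |x_v|^{m_v}` of `x ∈ K_∞`. -/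
def normInfty (x : KInfty K) : ℝ :=
  (∏ w, |x.1 w|) * ∏ w, ‖x.2 w‖ ^ 2

/-- `I_q(T)`: the volume of `{(x_1,…,x_q) ∈ ℝ^q : x_j ≥ 1 ∀ j, x_1⋯x_q < T}`. -/
def hypVol (q : ℕ) (T : ℝ) : ℝ :=
  (volume {x : Fin q → ℝ | (∀ i, 1 ≤ x i) ∧ ∏ i, x i < T}).toReal

/-- `𝔴`-part of an ideal: the product of `𝔭^{v_𝔭(𝔞)}` over primes `𝔭 ∣ 𝔴`; applied to
`𝔞 = F_i(σ,τ)O_K` this is the ideal `𝔴_i`. -/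
def coflatPart (w a : Ideal (𝓞 K)) : Ideal (𝓞 K) :=
  ((normalizedFactors a).filter (fun p => p ∣ w)).prod

/-- The volume `ω*_ψ(X;v) = vol 𝒟*_ψ(X;v)`, where `𝒟*_ψ(X;v)` is the set of
`(s,t) ∈ X^{1/m}𝒟` with `𝔑(F_i(s,t)) ≥ ψ_i v_i √(Y_i) 𝔑𝔴_i` for all `i` (with
`Y_i = c_i X^{d_i}`) and `|H_w(s_w,t_w)|_w ≥ 1` for all `w ∈ Ω_∞` and `H_w ∈ ℋ_w`. -/
def omegaStar {n : ℕ} {𝔯 : Ideal (𝓞 K)} (S : SystemOfForms K n) (P : Triplet K 𝔯)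
    (Hr : {w : InfinitePlace K // w.IsReal} → Finset (MvPolynomial (Fin 2) ℝ))
    (Hc : {w : InfinitePlace K // w.IsComplex} → Finset (MvPolynomial (Fin 2) ℂ))
    (c : Fin n → ℝ) (ψ : Fin n → Bool) (X : ℝ) (v : Fin n → ℝ) : ℝ :=
  (volume {p : KInfty K × KInfty K |
      p ∈ (X ^ ((1 : ℝ) / (Module.finrank ℚ K))) • P.box.D ∧
      (∀ i, (if ψ i then
          v i * Real.sqrt (c i * X ^ (S.dF i)) *
            (Ideal.absNorm (coflatPart K P.w
              (Ideal.span {evalForm K (S.F i) P.σ P.τ})) : ℝ)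
        else 0) ≤ normInfty K (evalAtPlaces K (S.F i) p.1 p.2)) ∧
      (∀ w, ∀ H ∈ Hr w, 1 ≤ |MvPolynomial.eval ![p.1.1 w, p.2.1 w] H|) ∧
      (∀ w, ∀ H ∈ Hc w, 1 ≤ ‖MvPolynomial.eval ![p.1.2 w, p.2.2 w] H‖)}).toReal

end

/-! ### Radial integrals over a local field -/

section Radial
variable {E : Type*} [NormedField E] [NormedAlgebra ℝ E] [FiniteDimensional ℝ E]
  [MeasurableSpace E] [BorelSpace E]
  (μ : Measure E) [μ.IsAddHaarMeasure]

/-- The integral of `‖x‖ ^ q` over an annulus, in polar coordinates. The inner radius may be `0`. -/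
theorem lintegral_annulus (q a b : ℝ) (ha : 0 ≤ a) (hab : a ≤ b)
    (hq : 0 < q + Module.finrank ℝ E) :
    ∫⁻ x in {x : E | a ≤ ‖x‖ ∧ ‖x‖ ≤ b}, ENNReal.ofReal (‖x‖ ^ q) ∂μ =
      ENNReal.ofReal (Module.finrank ℝ E * μ.real (Metric.ball 0 1) / (q + Module.finrank ℝ E) *
        (b ^ (q + Module.finrank ℝ E) - a ^ (q + Module.finrank ℝ E))) := by
  have : FiniteDimensional ℝ E := inferInstance
  set m := Module.finrank ℝ E with hm
  have hm1 : 1 ≤ m := Module.finrank_pos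
  have hmeas : MeasurableSet {x : E | a ≤ ‖x‖ ∧ ‖x‖ ≤ b} := by measurability
  have key : ∀ r ∈ Set.Ioi (0:ℝ), r ^ (m - 1) • (Set.Icc a b).indicator (fun r : ℝ => r ^ q) r
      = (Set.Icc a b).indicator (fun r : ℝ => r ^ (q + m - 1)) r := by
    intro r hr
    by_cases h : r ∈ Set.Icc a b
    · simp only [Set.indicator_of_mem h, smul_eq_mul]
      rw [← Real.rpow_natCast, ← Real.rpow_add hr]
      congr 1
      rw [Nat.cast_sub hm1]; push_cast; ring
    · simp [Set.indicator_of_notMem h]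
  have hII : IntervalIntegrable (fun r : ℝ => r ^ (q + m - 1)) volume a b :=
    intervalIntegral.intervalIntegrable_rpow' (by linarith)
  have hset : (Set.Ioi (0:ℝ) ∩ Set.Icc a b : Set ℝ) =ᵐ[volume] Set.Ioc a b := by
    have h0 : ∀ᵐ x : ℝ, x ≠ 0 ∧ x ≠ a := by
      filter_upwards [Measure.ae_ne volume (0:ℝ), Measure.ae_ne volume a] with x h1 h2
      exact ⟨h1, h2⟩
    filter_upwards [h0] with x hx
    apply propext
    change (0 < x ∧ a ≤ x ∧ x ≤ b) ↔ (a < x ∧ x ≤ b)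
    constructor
    · rintro ⟨h1, h2, h3⟩; exact ⟨lt_of_le_of_ne h2 (Ne.symm hx.2), h3⟩
    · rintro ⟨h1, h2⟩; exact ⟨by linarith, h1.le, h2⟩
  have hInt : Integrable (fun x : E => (Set.Icc a b).indicator (fun r : ℝ => r ^ q) ‖x‖) μ := by
    rw [integrable_fun_norm_addHaar μ (f := (Set.Icc a b).indicator (fun r : ℝ => r ^ q)),
      integrableOn_congr_fun key measurableSet_Ioi, IntegrableOn,
      integrable_indicator_iff measurableSet_Icc, IntegrableOn, Measure.restrict_restrict
        measurableSet_Icc, Set.inter_comm, Measure.restrict_congr_set hset]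
    exact hII.1
  have h1 : ∫⁻ x in {x : E | a ≤ ‖x‖ ∧ ‖x‖ ≤ b}, ENNReal.ofReal (‖x‖ ^ q) ∂μ =
      ∫⁻ x, ENNReal.ofReal ((Set.Icc a b).indicator (fun r : ℝ => r ^ q) ‖x‖) ∂μ := by
    rw [← lintegral_indicator hmeas]
    refine lintegral_congr fun x => ?_
    by_cases h : a ≤ ‖x‖ ∧ ‖x‖ ≤ b
    · rw [Set.indicator_of_mem (by exact h), Set.indicator_of_mem (by exact h)]
    · rw [Set.indicator_of_notMem (by exact h), Set.indicator_of_notMem (by exact h)]; simp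
  rw [h1, ← ofReal_integral_eq_lintegral_ofReal hInt]
  · congr 1
    rw [integral_fun_norm_addHaar μ (Set.indicator (Set.Icc a b) (fun r : ℝ => r ^ q)),
      setIntegral_congr_fun measurableSet_Ioi key, integral_indicator measurableSet_Icc,
      Measure.restrict_restrict measurableSet_Icc, Set.inter_comm, Measure.restrict_congr_set hset,
      ← intervalIntegral.integral_of_le hab, integral_rpow (Or.inl (by linarith))]
    simp only [smul_eq_mul, nsmul_eq_mul, sub_add_cancel]
    ring
  · refine Filter.Eventually.of_forall fun x => ?_
    refine Set.indicator_nonneg (fun r hr => ?_) _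
    exact Real.rpow_nonneg (ha.trans hr.1) _

/-- Integrability of `‖x‖ ^ q` at infinity for `q < - dim E`. -/
theorem lintegral_outer_lt_top (q M : ℝ) (hM : 0 < M)
    (hq : q + Module.finrank ℝ E < 0) :
    ∫⁻ x in {x : E | M < ‖x‖}, ENNReal.ofReal (‖x‖ ^ q) ∂μ < ⊤ := by
  have : FiniteDimensional ℝ E := inferInstance
  set m := Module.finrank ℝ E with hm
  have hm1 : 1 ≤ m := Module.finrank_pos
  have hmeas : MeasurableSet {x : E | M < ‖x‖} := by measurability
  have key : ∀ r ∈ Set.Ioi (0:ℝ), r ^ (m - 1) • (Set.Ioi M).indicator (fun r : ℝ => r ^ q) r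
      = (Set.Ioi M).indicator (fun r : ℝ => r ^ (q + m - 1)) r := by
    intro r hr
    by_cases h : r ∈ Set.Ioi M
    · simp only [Set.indicator_of_mem h, smul_eq_mul]
      rw [← Real.rpow_natCast, ← Real.rpow_add hr]
      congr 1
      rw [Nat.cast_sub hm1]; push_cast; ring
    · simp [Set.indicator_of_notMem h]
  have hInt : Integrable (fun x : E => (Set.Ioi M).indicator (fun r : ℝ => r ^ q) ‖x‖) μ := by
    rw [integrable_fun_norm_addHaar μ (f := (Set.Ioi M).indicator (fun r : ℝ => r ^ q)),
      integrableOn_congr_fun key measurableSet_Ioi]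
    apply Integrable.integrableOn
    rw [integrable_indicator_iff measurableSet_Ioi]
    exact integrableOn_Ioi_rpow_of_lt (by linarith) hM
  have h1 : ∫⁻ x in {x : E | M < ‖x‖}, ENNReal.ofReal (‖x‖ ^ q) ∂μ =
      ∫⁻ x, ENNReal.ofReal ((Set.Ioi M).indicator (fun r : ℝ => r ^ q) ‖x‖) ∂μ := by
    rw [← lintegral_indicator hmeas]
    refine lintegral_congr fun x => ?_
    by_cases h : M < ‖x‖
    · rw [Set.indicator_of_mem (by exact h), Set.indicator_of_mem (by exact h)]
    · rw [Set.indicator_of_notMem (by exact h), Set.indicator_of_notMem (by exact h)]; simp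
  rw [h1]
  exact hInt.lintegral_lt_top

/-- The substitution `s = t x`. The hypothesis `hdet` says that multiplication by `t` scales volumes
by `‖t‖ ^ dim E`, which holds for `ℝ` and `ℂ`. -/
theorem lintegral_scale (hdet : ∀ t : E, |LinearMap.det (LinearMap.mulLeft ℝ t)| =
      ‖t‖ ^ Module.finrank ℝ E) (t : E) (ht : t ≠ 0) (g : E → ENNReal) (hg : Measurable g) :
    ∫⁻ s, g s ∂μ = ENNReal.ofReal (‖t‖ ^ Module.finrank ℝ E) * ∫⁻ x, g (t * x) ∂μ := by
  have hpos : 0 < ‖t‖ ^ Module.finrank ℝ E := pow_pos (norm_pos_iff.2 ht) _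
  have hd : LinearMap.det (LinearMap.mulLeft ℝ t) ≠ 0 := by
    intro h0; have := hdet t; rw [h0, abs_zero] at this; linarith
  have h := Measure.map_linearMap_addHaar_eq_smul_addHaar μ hd
  have h2 : ∫⁻ x, g (t * x) ∂μ = ∫⁻ s, g s ∂(Measure.map (LinearMap.mulLeft ℝ t) μ) := by
    rw [lintegral_map hg]
    · rfl
    · exact (continuous_const.mul continuous_id).measurable
  rw [h2, h, lintegral_smul_measure, smul_eq_mul, ← mul_assoc, ← ENNReal.ofReal_mul hpos.le, abs_inv,
    hdet, mul_inv_cancel₀ hpos.ne', ENNReal.ofReal_one, one_mul]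

/-- Local integrability of `‖x - a‖ ^ (-p)`. -/
theorem lintegral_ball_sub_lt_top (a : E) (M p : ℝ) (hM : 0 ≤ M)
    (hpm : p < Module.finrank ℝ E) :
    ∫⁻ x in {x : E | ‖x‖ ≤ M}, ENNReal.ofReal (‖x - a‖ ^ (-p)) ∂μ < ⊤ := by
  have hmeas : MeasurableSet {x : E | ‖x‖ ≤ M} := by measurability
  have h := lintegral_annulus μ (-p) 0 (M + ‖a‖) le_rfl (by positivity) (by linarith)
  refine lt_of_le_of_lt ?_ (lt_of_eq_of_lt h ENNReal.ofReal_lt_top)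
  have hmeas2 : MeasurableSet {x : E | 0 ≤ ‖x‖ ∧ ‖x‖ ≤ M + ‖a‖} := by measurability
  rw [← lintegral_indicator hmeas, ← lintegral_indicator hmeas2,
    ← lintegral_sub_right_eq_self
      ({x : E | 0 ≤ ‖x‖ ∧ ‖x‖ ≤ M + ‖a‖}.indicator fun x => ENNReal.ofReal (‖x‖ ^ (-p))) a]
  refine lintegral_mono fun x => ?_
  by_cases hx : ‖x‖ ≤ M
  · rw [Set.indicator_of_mem (by exact hx), Set.indicator_of_mem]
    exact ⟨norm_nonneg _, (norm_sub_le _ _).trans (by linarith)⟩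
  · rw [Set.indicator_of_notMem (by exact hx)]; exact zero_le

end Radial

theorem hdet_real (t : ℝ) : |LinearMap.det (LinearMap.mulLeft ℝ t)| = ‖t‖ ^ Module.finrank ℝ ℝ := by
  have := congrArg (fun f => f t) (Algebra.norm_self (R := ℝ))
  simp only [Algebra.norm_apply] at this
  simp at this ⊢

theorem hdet_complex (t : ℂ) :
    |LinearMap.det (LinearMap.mulLeft ℝ t)| = ‖t‖ ^ Module.finrank ℝ ℂ := by
  have := Algebra.norm_complex_apply t
  rw [Algebra.norm_apply] at this
  change LinearMap.det (LinearMap.mulLeft ℝ t) = _ at this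
  rw [this, Complex.finrank_real_complex, Complex.normSq_eq_norm_sq]
  simp

/-! ### Integrability of negative powers of a separable polynomial -/

open Polynomial in
theorem poly_eval_norm (g : Polynomial ℂ) (hg : g.Separable) (z : ℂ) :
    ‖g.eval z‖ = ‖g.leadingCoeff‖ * ∏ θ ∈ g.roots.toFinset, ‖z - θ‖ := by
  rw [(IsAlgClosed.splits g).eval_eq_prod_roots, norm_mul, Finset.prod_multiset_map_count]
  congr 1
  rw [norm_prod]
  refine Finset.prod_congr rfl fun θ hθ => ?_
  rw [Multiset.count_eq_one_of_mem (nodup_roots hg) (by simpa using hθ), pow_one]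

theorem poly_card (g : Polynomial ℂ) (hg : g.Separable) :
    g.roots.toFinset.card = g.natDegree := by
  rw [Multiset.toFinset_card_of_nodup (Polynomial.nodup_roots hg)]
  exact (Polynomial.splits_iff_card_roots.1 (IsAlgClosed.splits g))

theorem poly_growth (g : Polynomial ℂ) (hg : g.Separable) :
    ∃ M c : ℝ, 0 < M ∧ 0 < c ∧ ∀ z : ℂ, M < ‖z‖ → c * ‖z‖ ^ g.natDegree ≤ ‖g.eval z‖ := by
  refine ⟨2 * (∑ θ ∈ g.roots.toFinset, ‖θ‖) + 1, ‖g.leadingCoeff‖ * (1/2) ^ g.natDegree,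
    by positivity, ?_, ?_⟩
  · have : g.leadingCoeff ≠ 0 := Polynomial.leadingCoeff_ne_zero.2 hg.ne_zero
    positivity
  · intro z hz
    rw [poly_eval_norm g hg, mul_assoc, ← mul_pow, ← poly_card g hg, ← Finset.prod_const]
    refine mul_le_mul_of_nonneg_left ?_ (norm_nonneg _)
    refine Finset.prod_le_prod (fun _ _ => by positivity) fun θ hθ => ?_
    have h1 : ‖θ‖ ≤ ∑ θ ∈ g.roots.toFinset, ‖θ‖ :=
      Finset.single_le_sum (f := fun θ : ℂ => ‖θ‖) (fun _ _ => norm_nonneg _) hθ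
    have h2 := norm_sub_norm_le z θ
    linarith

/-- Partial fractions: the zeros of `g` are simple, so near each of them `1 / g` is no larger than a
simple pole. At a zero of `g` the left-hand side is the junk value `0`. -/
theorem poly_inv_bound (g : Polynomial ℂ) (hg : g.Separable) (hd : 1 ≤ g.natDegree) :
    ∃ C : ℝ, 0 < C ∧ ∀ z : ℂ, ‖g.eval z‖⁻¹ ≤ ∑ θ ∈ g.roots.toFinset, C * ‖z - θ‖⁻¹ := by
  set T := g.roots.toFinset with hT
  have hTn : T.Nonempty := by
    rw [← Finset.card_pos, hT, poly_card g hg]; omega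
  have hlc : 0 < ‖g.leadingCoeff‖ :=
    norm_pos_iff.2 (Polynomial.leadingCoeff_ne_zero.2 hg.ne_zero)
  set W : ℂ → ℝ := fun θ => ∏ k ∈ T.erase θ, ‖θ - k‖⁻¹ with hW
  have hW0 : ∀ θ, 0 ≤ W θ := fun θ => Finset.prod_nonneg fun _ _ => by positivity
  refine ⟨‖g.leadingCoeff‖⁻¹ * (∑ θ ∈ T, W θ + 1), ?_, fun z => ?_⟩
  · have := Finset.sum_nonneg (s := T) fun θ _ => hW0 θ
    positivity
  by_cases hz : g.eval z = 0
  · rw [hz, norm_zero, inv_zero]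
    have := Finset.sum_nonneg (s := T) fun θ _ => hW0 θ
    exact Finset.sum_nonneg fun _ _ => by positivity
  have hne : ∀ θ ∈ T, 0 < ‖z - θ‖ := by
    intro θ hθ
    rw [norm_pos_iff, sub_ne_zero]
    rintro rfl
    rw [hT, Multiset.mem_toFinset, Polynomial.mem_roots hg.ne_zero] at hθ
    exact hz hθ
  -- the Lagrange basis polynomials at the zeros of `g` sum to one; divide this by `g`
  have h1 := congrArg (Polynomial.eval z)
    (Lagrange.sum_basis (s := T) (v := id) (Set.injOn_id _) hTn)
  rw [Polynomial.eval_finsetSum, Polynomial.eval_one] at h1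
  have h2 : (1:ℝ) ≤ ∑ θ ∈ T, W θ * ∏ k ∈ T.erase θ, ‖z - k‖ := by
    calc (1:ℝ) = ‖∑ θ ∈ T, Polynomial.eval z (Lagrange.basis T id θ)‖ := by rw [h1]; simp
      _ ≤ ∑ θ ∈ T, ‖Polynomial.eval z (Lagrange.basis T id θ)‖ := norm_sum_le _ _
      _ = _ := by
        refine Finset.sum_congr rfl fun θ _ => ?_
        rw [Lagrange.basis, Polynomial.eval_prod, norm_prod, hW, ← Finset.prod_mul_distrib]
        refine Finset.prod_congr rfl fun k _ => ?_
        simp [Lagrange.basisDivisor]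
  rw [poly_eval_norm g hg, mul_inv]
  have hP : 0 < ∏ θ ∈ T, ‖z - θ‖ := Finset.prod_pos hne
  have h3 : (∏ θ ∈ T, ‖z - θ‖)⁻¹ ≤ ∑ θ ∈ T, W θ * ‖z - θ‖⁻¹ := by
    rw [inv_le_iff_one_le_mul₀ hP, Finset.sum_mul]
    refine h2.trans (le_of_eq (Finset.sum_congr rfl fun θ hθ => ?_))
    rw [← Finset.mul_prod_erase T _ hθ]
    have := (hne θ hθ).ne'
    field_simp
  calc ‖g.leadingCoeff‖⁻¹ * (∏ θ ∈ T, ‖z - θ‖)⁻¹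
      ≤ ‖g.leadingCoeff‖⁻¹ * ∑ θ ∈ T, W θ * ‖z - θ‖⁻¹ := by gcongr
    _ = ∑ θ ∈ T, ‖g.leadingCoeff‖⁻¹ * W θ * ‖z - θ‖⁻¹ := by
      rw [Finset.mul_sum]; exact Finset.sum_congr rfl fun _ _ => by ring
    _ ≤ _ := by
      refine Finset.sum_le_sum fun θ hθ => ?_
      have : W θ ≤ ∑ θ ∈ T, W θ + 1 := by
        have := Finset.single_le_sum (f := W) (fun θ _ => hW0 θ) hθ
        linarith
      gcongr

section PolyInt
variable {E : Type*} [NormedField E] [NormedAlgebra ℝ E] [FiniteDimensional ℝ E]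
  [MeasurableSpace E] [BorelSpace E]
  (μ : Measure E) [μ.IsAddHaarMeasure]

/-- For a separable `g` of degree `d` and `γ < 1 < d γ`, the function `|g(x)| ^ (-γ dim E)` is
integrable over `E`. Here `E` is `ℝ` or `ℂ` with its embedding `ι` in `ℂ`, and `ρ` moves the zeros of
`g` into `E` without increasing the distance to points of `E`: the real part for `E = ℝ`, the
identity for `E = ℂ`. -/
theorem lintegral_poly_lt_top (ι : E → ℂ) (hι : ∀ x, ‖ι x‖ = ‖x‖) (ρ : ℂ → E)
    (hρ : ∀ x z, ‖x - ρ z‖ ≤ ‖ι x - z‖)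
    (g : Polynomial ℂ) (hg : g.Separable) (hd : 1 ≤ g.natDegree)
    (γ : ℝ) (hγ0 : 0 < γ) (hγ1 : γ < 1) (hdγ : 1 < g.natDegree * γ) :
    ∫⁻ x, ENNReal.ofReal (‖g.eval (ι x)‖ ^ (-(γ * Module.finrank ℝ E))) ∂μ < ⊤ := by
  obtain ⟨M, c, hM, hc, hgrow⟩ := poly_growth g hg
  obtain ⟨C, hC, hinv⟩ := poly_inv_bound g hg hd
  set m := Module.finrank ℝ E with hm
  have hm1 : (1:ℝ) ≤ m := by exact_mod_cast (Module.finrank_pos : 0 < Module.finrank ℝ E)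
  set T := g.roots.toFinset with hT
  set p : ℝ := γ * m with hp
  have hp0 : 0 < p := by positivity
  have hnt : Nontrivial E := inferInstance
  have hms : MeasurableSet {x : E | ‖x‖ ≤ M} := by measurability
  rw [← lintegral_add_compl _ hms]
  refine ENNReal.add_lt_top.2 ⟨?_, ?_⟩
  · have hb : ∀ x : E, (∀ θ ∈ T, x ≠ ρ θ) → ENNReal.ofReal (‖g.eval (ι x)‖ ^ (-p)) ≤
        ∑ θ ∈ T, ENNReal.ofReal ((T.card * C) ^ p) * ENNReal.ofReal (‖x - ρ θ‖ ^ (-p)) := by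
      intro x hx
      have hTn : T.Nonempty := by
        rw [← Finset.card_pos, hT, poly_card g hg]; omega
      obtain ⟨θ, hθ, hmax⟩ := Finset.exists_max_image T (fun θ => ‖ι x - θ‖⁻¹) hTn
      have h1 : ‖g.eval (ι x)‖⁻¹ ≤ T.card * C * ‖x - ρ θ‖⁻¹ := by
        calc ‖g.eval (ι x)‖⁻¹ ≤ ∑ θ ∈ T, C * ‖ι x - θ‖⁻¹ := hinv _
          _ ≤ ∑ _k ∈ T, C * ‖ι x - θ‖⁻¹ := by
            refine Finset.sum_le_sum fun k hk => ?_
            have := hmax k hk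
            gcongr
          _ = T.card * C * ‖ι x - θ‖⁻¹ := by rw [Finset.sum_const, nsmul_eq_mul, mul_assoc]
          _ ≤ _ := by
            have h0 : 0 < ‖x - ρ θ‖ := norm_pos_iff.2 (sub_ne_zero.2 (hx θ hθ))
            have := hρ x θ
            gcongr
      calc ENNReal.ofReal (‖g.eval (ι x)‖ ^ (-p)) ≤
          ENNReal.ofReal ((T.card * C) ^ p) * ENNReal.ofReal (‖x - ρ θ‖ ^ (-p)) := by
            rw [← ENNReal.ofReal_mul (by positivity)]
            refine ENNReal.ofReal_le_ofReal ?_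
            rw [Real.rpow_neg (norm_nonneg _), Real.rpow_neg (norm_nonneg _),
              ← Real.inv_rpow (norm_nonneg _), ← Real.inv_rpow (norm_nonneg _),
              ← Real.mul_rpow (by positivity) (by positivity)]
            exact Real.rpow_le_rpow (by positivity) h1 hp0.le
        _ ≤ _ := Finset.single_le_sum (f := fun θ => ENNReal.ofReal ((T.card * C) ^ p) *
            ENNReal.ofReal (‖x - ρ θ‖ ^ (-p))) (fun _ _ => zero_le) hθ
    have hae : ∀ᵐ x ∂μ.restrict {x : E | ‖x‖ ≤ M},
        ENNReal.ofReal (‖g.eval (ι x)‖ ^ (-p)) ≤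
        ∑ θ ∈ T, ENNReal.ofReal ((T.card * C) ^ p) * ENNReal.ofReal (‖x - ρ θ‖ ^ (-p)) := by
      refine ae_restrict_of_ae ?_
      have : ∀ᵐ x ∂μ, ∀ θ ∈ T, x ≠ ρ θ := by
        rw [Finset.eventually_all]
        intro θ _
        exact Measure.ae_ne μ (ρ θ)
      filter_upwards [this] with x hx using hb x hx
    refine (lintegral_mono_ae hae).trans_lt ?_
    rw [lintegral_finsetSum]
    · refine ENNReal.sum_lt_top.2 fun θ _ => ?_
      rw [lintegral_const_mul]
      · refine ENNReal.mul_lt_top ENNReal.ofReal_lt_top ?_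
        exact lintegral_ball_sub_lt_top μ _ M p hM.le (by rw [hp]; nlinarith)
      · fun_prop
    · intro θ _
      fun_prop
  · have hset : {x : E | ‖x‖ ≤ M}ᶜ = {x : E | M < ‖x‖} := by ext; simp
    rw [hset]
    have hb : ∀ x ∈ {x : E | M < ‖x‖}, ENNReal.ofReal (‖g.eval (ι x)‖ ^ (-p)) ≤
        ENNReal.ofReal (c ^ (-p)) * ENNReal.ofReal (‖x‖ ^ (-(g.natDegree * p))) := by
      intro x hx
      have hx' : M < ‖x‖ := hx
      have hx0 : 0 < ‖x‖ := hM.trans hx'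
      rw [← ENNReal.ofReal_mul (by positivity)]
      refine ENNReal.ofReal_le_ofReal ?_
      have h1 := hgrow (ι x) (by rw [hι]; exact hx)
      rw [hι] at h1
      calc ‖g.eval (ι x)‖ ^ (-p) ≤ (c * ‖x‖ ^ g.natDegree) ^ (-p) :=
            Real.rpow_le_rpow_of_nonpos (by positivity) h1 (by linarith)
        _ = _ := by
          rw [Real.mul_rpow hc.le (by positivity), ← Real.rpow_natCast, ← Real.rpow_mul hx0.le]
          congr 2; ring
    refine (setLIntegral_mono (by fun_prop) hb).trans_lt ?_
    rw [lintegral_const_mul _ (by fun_prop)]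
    refine ENNReal.mul_lt_top ENNReal.ofReal_lt_top ?_
    exact lintegral_outer_lt_top μ _ M hM (by rw [hp]; nlinarith)

end PolyInt

/-! ### Moment and shell bounds at one place -/

section Local

/-- The moment of order `-κ` of `y` is at most `M`. The points where `y = 0` contribute nothing if
`κ ≠ 0`, because `0 ^ (-κ) = 0`. -/
def MomentBound {Ω : Type*} [MeasurableSpace Ω] (μ : Measure Ω) (y : Ω → ℝ) (κ M : ℝ) : Prop :=
  ∫⁻ ω, ENNReal.ofReal ((y ω) ^ (-κ)) ∂μ ≤ ENNReal.ofReal M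

/-- The shell `a ≤ y ≤ b` has measure at most `M (b - a) a ^ (κ - 1)`. For
`κ ≤ 1` the right-hand side dominates `M (b ^ κ - a ^ κ)`, see `rpow_sub_rpow_le`. -/
def ShellBound {Ω : Type*} [MeasurableSpace Ω] (μ : Measure Ω) (y : Ω → ℝ) (κ M : ℝ) : Prop :=
  ∀ a b : ℝ, 0 < a → a ≤ b →
    μ {ω | a ≤ y ω ∧ y ω ≤ b} ≤ ENNReal.ofReal (M * ((b - a) * a ^ (κ - 1)))

/-- The box of size `R` at one place, truncated by `|F| ≥ 1`. -/
def localRegion {E : Type*} [NormedField E] (F : E × E → E) (R : ℝ) : Set (E × E) :=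
  {p | ‖p.1‖ ≤ R ∧ ‖p.2‖ ≤ R ∧ 1 ≤ ‖F p‖}

/-- Bernoulli's inequality for an exponent `κ` in `[0, 1]`. -/
theorem rpow_sub_rpow_le (κ a b : ℝ) (hκ0 : 0 ≤ κ) (hκ1 : κ ≤ 1) (ha : 0 < a) (hab : a ≤ b) :
    b ^ κ - a ^ κ ≤ (b - a) * a ^ (κ - 1) := by
  have h1 : b = a * (1 + (b / a - 1)) := by field_simp; ring
  have h2 : -1 ≤ b / a - 1 := by
    have : 0 ≤ b / a := div_nonneg (ha.le.trans hab) ha.le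
    linarith
  have h3 := rpow_one_add_le_one_add_mul_self h2 hκ0 hκ1
  have h4 : 0 ≤ b / a - 1 := by rw [sub_nonneg, one_le_div ha]; exact hab
  have h5 : b ^ κ = a ^ κ * (1 + (b / a - 1)) ^ κ := by
    rw [← Real.mul_rpow ha.le (by linarith), ← h1]
  have h6 : a ^ (κ - 1) = a ^ κ / a := by rw [Real.rpow_sub_one ha.ne']
  have ha' : 0 < a ^ κ := Real.rpow_pos_of_pos ha _
  calc b ^ κ - a ^ κ = a ^ κ * ((1 + (b / a - 1)) ^ κ - 1) := by rw [h5]; ring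
    _ ≤ a ^ κ * (b / a - 1) := by
        gcongr
        nlinarith
    _ = _ := by rw [h6]; field_simp

variable {E : Type*} [NormedField E] [NormedAlgebra ℝ E] [FiniteDimensional ℝ E]
  [MeasurableSpace E] [BorelSpace E] [SecondCountableTopology E]
  (μ : Measure E) [μ.IsAddHaarMeasure]

/-- The local bounds for a linear form, with `κ = 1`. The moment of order `-1` diverges logarithmically
at the zeros of `F`; the truncation allows the exponent `1 - η` instead. -/
theorem local_bounds_one
    (hdet : ∀ t : E, |LinearMap.det (LinearMap.mulLeft ℝ t)| = ‖t‖ ^ Module.finrank ℝ E)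
    (F : E × E → E) (hFm : Measurable F) (α β : E) (hα : α ≠ 0)
    (hF : ∀ s t, t ≠ 0 → F (s, t) = α * s + β * t)
    (η : ℝ) (hη0 : 0 < η) (hη1 : η < 1) :
    ∃ C : ℝ, 0 < C ∧ ∀ R : ℝ, 1 ≤ R →
      MomentBound ((μ.prod μ).restrict (localRegion F R))
        (fun p => ‖F p‖ ^ Module.finrank ℝ E) 1
        (C * R ^ (Module.finrank ℝ E * (1 + η))) ∧
      ShellBound ((μ.prod μ).restrict (localRegion F R))
        (fun p => ‖F p‖ ^ Module.finrank ℝ E) 1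
        (C * R ^ (Module.finrank ℝ E * (1 + η))) := by
  have : ProperSpace E := FiniteDimensional.proper ℝ E
  have hnt : Nontrivial E := inferInstance
  set m := Module.finrank ℝ E with hm
  have hm1 : (1:ℝ) ≤ m := by exact_mod_cast (Module.finrank_pos : 0 < Module.finrank ℝ E)
  have hm0 : m ≠ 0 := (Module.finrank_pos : 0 < Module.finrank ℝ E).ne'
  have hα0 : 0 < ‖α‖ := norm_pos_iff.2 hα
  set V := μ.real (Metric.ball (0:E) 1) with hV
  have hV0 : 0 ≤ V := measureReal_nonneg
  -- affine substitution in the first variable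
  have hsub : ∀ (t : E) (h : E → ENNReal), Measurable h →
      ∫⁻ s, h (α * s + β * t) ∂μ = ENNReal.ofReal ((‖α‖ ^ m)⁻¹) * ∫⁻ u, h u ∂μ := by
    intro t h hh
    have h1 := lintegral_scale μ hdet α hα (fun u => h (u + β * t)) (by fun_prop)
    rw [lintegral_add_right_eq_self] at h1
    rw [h1, ← mul_assoc, ← ENNReal.ofReal_mul (by positivity), inv_mul_cancel₀ (by positivity)]
    simp
  have hball : ∀ R : ℝ, 0 ≤ R → ∫⁻ t, ({t : E | ‖t‖ ≤ R}.indicator (fun _ => 1) t) ∂μ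
      = ENNReal.ofReal (V * R ^ m) := by
    intro R hR
    have hms : MeasurableSet {t : E | ‖t‖ ≤ R} := by measurability
    rw [lintegral_indicator hms, lintegral_one, Measure.restrict_apply_univ]
    have : {t : E | ‖t‖ ≤ R} = Metric.closedBall 0 R := by ext; simp
    rw [this, Measure.addHaar_closedBall μ 0 hR, mul_comm V, ENNReal.ofReal_mul (by positivity), hV,
      ofReal_measureReal]
  -- integrals of functions of `F` over the truncated box reduce to integrals over a ball
  have hton : ∀ (R : ℝ), 0 ≤ R → ∀ (h : E → ENNReal), Measurable h →
      ∫⁻ p in localRegion F R, h (F p) ∂(μ.prod μ) ≤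
        ENNReal.ofReal (V * R ^ m) * (ENNReal.ofReal ((‖α‖ ^ m)⁻¹) *
          ∫⁻ u in {u : E | ‖u‖ ≤ (‖α‖ + ‖β‖) * R}, h u ∂μ) := by
    intro R hR h hh
    have hms : MeasurableSet {u : E | ‖u‖ ≤ (‖α‖ + ‖β‖) * R} := by measurability
    have hms2 : MeasurableSet {t : E | ‖t‖ ≤ R} := by measurability
    have hms1 : MeasurableSet (localRegion F R) := by
      unfold localRegion
      measurability
    set H : E → ENNReal := {u : E | ‖u‖ ≤ (‖α‖ + ‖β‖) * R}.indicator h with hH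
    have hHm : Measurable H := hh.indicator hms
    rw [← lintegral_indicator hms1, ← lintegral_indicator hms]
    have hInt : Measurable ((localRegion F R).indicator (fun p => h (F p))) :=
      (hh.comp hFm).indicator hms1
    rw [lintegral_prod_symm' _ hInt]
    calc ∫⁻ t, ∫⁻ s, (localRegion F R).indicator (fun p => h (F p)) (s, t) ∂μ ∂μ
        ≤ ∫⁻ t, {t : E | ‖t‖ ≤ R}.indicator (fun _ => 1) t *
            ∫⁻ s, H (α * s + β * t) ∂μ ∂μ := by
          refine lintegral_mono_ae ?_
          filter_upwards [Measure.ae_ne μ (0:E)] with t ht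
          rw [← lintegral_const_mul _ (by fun_prop)]
          refine lintegral_mono fun s => ?_
          by_cases hp : (s, t) ∈ localRegion F R
          · rw [Set.indicator_of_mem hp]
            obtain ⟨h1, h2, h3⟩ := hp
            simp only at h1 h2
            rw [Set.indicator_of_mem (by exact h2), one_mul, hH, ← hF s t ht,
              Set.indicator_of_mem]
            change ‖F (s, t)‖ ≤ _
            rw [hF s t ht]
            calc ‖α * s + β * t‖ ≤ ‖α‖ * ‖s‖ + ‖β‖ * ‖t‖ := by
                  refine (norm_add_le _ _).trans ?_
                  rw [norm_mul, norm_mul]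
              _ ≤ ‖α‖ * R + ‖β‖ * R := by gcongr
              _ = _ := by ring
          · rw [Set.indicator_of_notMem hp]; exact zero_le
      _ = _ := by
          simp_rw [hsub _ H hHm]
          rw [lintegral_mul_const, hball R hR]
          exact measurable_const.indicator hms2
  set q : ℝ := -((1 - η) * m) with hq
  set C1 : ℝ := V * (‖α‖ ^ m)⁻¹ * (m * V / (q + m) * (‖α‖ + ‖β‖) ^ (q + m)) with hC1
  set C2 : ℝ := V * (‖α‖ ^ m)⁻¹ * V with hC2
  have hqm : q + m = η * m := by rw [hq]; ring
  have hqm0 : 0 < q + m := by rw [hqm]; positivity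
  have hC10 : 0 ≤ C1 := by positivity
  have hC20 : 0 ≤ C2 := by positivity
  refine ⟨C1 + C2 + 1, by positivity, fun R hR => ⟨?_, ?_⟩⟩
  · have hms1 : MeasurableSet (localRegion F R) := by
      unfold localRegion
      measurability
    have hR0 : 0 < R := by linarith
    have hle : ∀ p ∈ localRegion F R, ENNReal.ofReal ((‖F p‖ ^ m) ^ (-(1:ℝ))) ≤
        (fun u : E => ENNReal.ofReal (‖u‖ ^ q)) (F p) := by
      intro p hp
      refine ENNReal.ofReal_le_ofReal ?_
      rw [← Real.rpow_natCast, ← Real.rpow_mul (norm_nonneg _)]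
      refine Real.rpow_le_rpow_of_exponent_le hp.2.2 ?_
      rw [hq]; nlinarith
    have hann := lintegral_annulus μ q 0 ((‖α‖ + ‖β‖) * R) le_rfl (by positivity) hqm0
    simp only [norm_nonneg, true_and] at hann
    refine (setLIntegral_mono (by fun_prop) hle).trans ?_
    refine (hton R hR0.le (fun u : E => ENNReal.ofReal (‖u‖ ^ q)) (by fun_prop)).trans ?_
    rw [hann, ← ENNReal.ofReal_mul (by positivity), ← ENNReal.ofReal_mul (by positivity)]
    refine ENNReal.ofReal_le_ofReal ?_
    rw [Real.zero_rpow hqm0.ne', sub_zero, Real.mul_rpow (by positivity) hR0.le]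
    have e1 : R ^ (m * (1 + η)) = R ^ m * R ^ (q + m) := by
      rw [← Real.rpow_natCast, ← Real.rpow_add hR0, hqm]; congr 1; ring
    rw [e1]
    calc _ = C1 * (R ^ m * R ^ (q + m)) := by rw [hC1]; ring
      _ ≤ _ := by gcongr; linarith
  · intro a b ha hab
    have hR0 : 0 < R := by linarith
    have hms1 : MeasurableSet (localRegion F R) := by
      unfold localRegion
      measurability
    have hSm : MeasurableSet {u : E | a ≤ ‖u‖ ^ m ∧ ‖u‖ ^ m ≤ b} := by measurability
    have hSm2 : MeasurableSet {p : E × E | a ≤ ‖F p‖ ^ m ∧ ‖F p‖ ^ m ≤ b} := hSm.preimage hFm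
    have h1 := hton R hR0.le ({u : E | a ≤ ‖u‖ ^ m ∧ ‖u‖ ^ m ≤ b}.indicator fun _ => 1)
      (measurable_const.indicator hSm)
    have h2 : (fun p => ({u : E | a ≤ ‖u‖ ^ m ∧ ‖u‖ ^ m ≤ b}.indicator
        (fun _ => (1:ENNReal))) (F p)) =
        {p : E × E | a ≤ ‖F p‖ ^ m ∧ ‖F p‖ ^ m ≤ b}.indicator fun _ => 1 := by
      ext p; rfl
    rw [h2, lintegral_indicator hSm2, lintegral_one, Measure.restrict_apply_univ] at h1
    refine h1.trans ?_
    have h3 : ∫⁻ u in {u : E | ‖u‖ ≤ (‖α‖ + ‖β‖) * R},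
        ({u : E | a ≤ ‖u‖ ^ m ∧ ‖u‖ ^ m ≤ b}.indicator fun _ => 1) u ∂μ ≤
        ENNReal.ofReal (V * (b - a)) := by
      refine (setLIntegral_le_lintegral _ _).trans ?_
      have hset : {u : E | a ≤ ‖u‖ ^ m ∧ ‖u‖ ^ m ≤ b} =
          {u : E | a ^ ((m:ℝ)⁻¹) ≤ ‖u‖ ∧ ‖u‖ ≤ b ^ ((m:ℝ)⁻¹)} := by
        ext u
        simp only [Set.mem_ofPred_eq]
        rw [Real.rpow_inv_le_iff_of_pos ha.le (norm_nonneg _) (by linarith),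
          Real.le_rpow_inv_iff_of_pos (norm_nonneg _) (by linarith) (by linarith),
          Real.rpow_natCast]
      rw [lintegral_indicator hSm, hset]
      have hann := lintegral_annulus μ 0 (a ^ ((m:ℝ)⁻¹)) (b ^ ((m:ℝ)⁻¹)) (by positivity)
        (Real.rpow_le_rpow ha.le hab (by positivity)) (by rw [zero_add]; linarith)
      simp only [Real.rpow_zero, ENNReal.ofReal_one, zero_add] at hann
      rw [hann, Real.rpow_inv_rpow ha.le (by linarith), Real.rpow_inv_rpow (by linarith) (by linarith),
        mul_div_assoc, mul_comm (m:ℝ), div_mul_cancel₀ _ (by linarith)]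
    calc _ ≤ ENNReal.ofReal (V * R ^ m) * (ENNReal.ofReal ((‖α‖ ^ m)⁻¹) *
          ENNReal.ofReal (V * (b - a))) := by gcongr
      _ = ENNReal.ofReal (C2 * R ^ m * (b - a)) := by
        rw [← ENNReal.ofReal_mul (by positivity), ← ENNReal.ofReal_mul (by positivity), hC2]
        congr 1; ring
      _ ≤ _ := by
        refine ENNReal.ofReal_le_ofReal ?_
        rw [sub_self, Real.rpow_zero, mul_one]
        have hba : 0 ≤ b - a := by linarith
        have : R ^ m ≤ R ^ (m * (1 + η)) := by
          rw [← Real.rpow_natCast]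
          refine Real.rpow_le_rpow_of_exponent_le hR ?_
          nlinarith
        gcongr
        linarith

end Local

section Local2
variable {E : Type*} [NormedField E] [NormedAlgebra ℝ E] [FiniteDimensional ℝ E]
  [MeasurableSpace E] [BorelSpace E] [SecondCountableTopology E]
  (μ : Measure E) [μ.IsAddHaarMeasure]

/-- The local bounds for a form of degree `d ≥ 2`, with `κ = 2 / d`. Here `φ x` stands for
`|F(x, 1)|`, which is assumed integrable to the power `-(κ - η) dim E` only. In the moment,
`|F| ≥ 1` allows `κ` to be replaced by `κ - η`; in the shell, where `κ` enters through the exact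
integral over `t`, a factor `|F| ^ (η dim E) ≥ 1`, bounded in terms of `R` and `φ`, is inserted. -/
theorem local_bounds_two
    (hdet : ∀ t : E, |LinearMap.det (LinearMap.mulLeft ℝ t)| = ‖t‖ ^ Module.finrank ℝ E)
    (F : E × E → E) (hFm : Measurable F) (φ : E → ℝ) (hφm : Measurable φ) (hφ0 : ∀ x, 0 ≤ φ x)
    (d : ℕ) (hd : 2 ≤ d)
    (hF : ∀ s t, t ≠ 0 → ‖F (s, t)‖ = ‖t‖ ^ d * φ (s / t))
    (η : ℝ) (hη0 : 0 < η)
    (hInt : ∫⁻ x, ENNReal.ofReal (φ x ^ (-((2 / d - η) * Module.finrank ℝ E))) ∂μ < ⊤) :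
    ∃ C : ℝ, 0 < C ∧ ∀ R : ℝ, 1 ≤ R →
      MomentBound ((μ.prod μ).restrict (localRegion F R))
        (fun p => ‖F p‖ ^ Module.finrank ℝ E) (2 / d)
        (C * R ^ (Module.finrank ℝ E * (d * η))) ∧
      ShellBound ((μ.prod μ).restrict (localRegion F R))
        (fun p => ‖F p‖ ^ Module.finrank ℝ E) (2 / d)
        (C * R ^ (Module.finrank ℝ E * (d * η))) := by
  have : ProperSpace E := FiniteDimensional.proper ℝ E
  have hnt : Nontrivial E := inferInstance
  set m := Module.finrank ℝ E with hm
  have hm1 : (1:ℝ) ≤ m := by exact_mod_cast (Module.finrank_pos : 0 < Module.finrank ℝ E)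
  have hm0 : m ≠ 0 := (Module.finrank_pos : 0 < Module.finrank ℝ E).ne'
  have hd2 : (2:ℝ) ≤ d := by exact_mod_cast hd
  set V := μ.real (Metric.ball (0:E) 1) with hV
  have hV0 : 0 ≤ V := measureReal_nonneg
  set κ : ℝ := 2 / d with hκ
  have hκ0 : 0 < κ := by positivity
  have hκ1 : κ ≤ 1 := by rw [hκ, div_le_one (by linarith)]; exact hd2
  have hdκ : d * κ = 2 := by rw [hκ]; field_simp
  set γ : ℝ := κ - η with hγ
  set J := (∫⁻ x, ENNReal.ofReal (φ x ^ (-(γ * m))) ∂μ).toReal with hJ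
  have hJ' : ∫⁻ x, ENNReal.ofReal (φ x ^ (-(γ * m))) ∂μ = ENNReal.ofReal J :=
    (ENNReal.ofReal_toReal hInt.ne).symm
  have hJ0 : 0 ≤ J := ENNReal.toReal_nonneg
  have hms1 : ∀ R, MeasurableSet (localRegion F R) := by
    intro R
    exact (measurableSet_le measurable_fst.norm measurable_const).inter
      ((measurableSet_le measurable_snd.norm measurable_const).inter
        (measurableSet_le measurable_const hFm.norm))
  have hms2 : ∀ R : ℝ, MeasurableSet {t : E | ‖t‖ ≤ R} := fun R =>
    measurableSet_le measurable_norm measurable_const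
  -- Tonelli and the substitution `s = t * x`
  have hton : ∀ (h : E × E → ENNReal), Measurable h →
      ∫⁻ p, h p ∂(μ.prod μ) =
        ∫⁻ t, ENNReal.ofReal (‖t‖ ^ m) * ∫⁻ x, h (t * x, t) ∂μ ∂μ := by
    intro h hh
    rw [lintegral_prod_symm' _ hh]
    refine lintegral_congr_ae ?_
    filter_upwards [Measure.ae_ne μ (0:E)] with t ht
    exact lintegral_scale μ hdet t ht (fun s => h (s, t)) (by fun_prop)
  set q : ℝ := m - d * (γ * m) with hq
  have hqm : q + m = m * (d * η) := by
    rw [hq, hγ]; linear_combination (-(m:ℝ)) * hdκ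
  have hqm0 : 0 < q + m := by rw [hqm]; positivity
  set C1 : ℝ := m * V / (q + m) * J with hC1
  set C2 : ℝ := m * V / (m + m) * J with hC2
  have hC10 : 0 ≤ C1 := by positivity
  have hC20 : 0 ≤ C2 := by positivity
  refine ⟨C1 + C2 + 1, by positivity, fun R hR => ⟨?_, ?_⟩⟩
  · have hR0 : 0 < R := by linarith
    unfold MomentBound
    have hle : ∀ p ∈ localRegion F R, ENNReal.ofReal ((‖F p‖ ^ m) ^ (-κ)) ≤
        {p : E × E | ‖p.2‖ ≤ R}.indicator (fun p => ENNReal.ofReal (‖F p‖ ^ (-(γ * m)))) p := by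
      intro p hp
      rw [Set.indicator_of_mem (by exact hp.2.1)]
      refine ENNReal.ofReal_le_ofReal ?_
      rw [← Real.rpow_natCast, ← Real.rpow_mul (norm_nonneg _)]
      refine Real.rpow_le_rpow_of_exponent_le hp.2.2 ?_
      rw [hγ]; nlinarith
    have hHm : Measurable ({p : E × E | ‖p.2‖ ≤ R}.indicator
        (fun p => ENNReal.ofReal (‖F p‖ ^ (-(γ * m))))) :=
      Measurable.indicator (by fun_prop) (measurableSet_le measurable_snd.norm measurable_const)
    refine (setLIntegral_mono hHm hle).trans ?_
    refine (setLIntegral_le_lintegral _ _).trans ?_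
    rw [hton _ hHm]
    have hann := lintegral_annulus μ q 0 R le_rfl hR0.le hqm0
    simp only [norm_nonneg, true_and] at hann
    calc _ = ∫⁻ t, ({t : E | ‖t‖ ≤ R}.indicator (fun t => ENNReal.ofReal (‖t‖ ^ q)) t) *
              ENNReal.ofReal J ∂μ := by
          refine lintegral_congr_ae ?_
          filter_upwards [Measure.ae_ne μ (0:E)] with t ht
          have ht0 : 0 < ‖t‖ := norm_pos_iff.2 ht
          by_cases htR : ‖t‖ ≤ R
          · rw [Set.indicator_of_mem (by exact htR)]
            have : ∀ x, {p : E × E | ‖p.2‖ ≤ R}.indicator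
                (fun p => ENNReal.ofReal (‖F p‖ ^ (-(γ * m)))) (t * x, t) =
                ENNReal.ofReal (‖t‖ ^ (-(d * (γ * m)))) *
                  ENNReal.ofReal (φ x ^ (-(γ * m))) := by
              intro x
              rw [Set.indicator_of_mem (by exact htR), hF _ _ ht, mul_div_cancel_left₀ _ ht,
                Real.mul_rpow (by positivity) (hφ0 x), ENNReal.ofReal_mul (by positivity),
                ← Real.rpow_natCast, ← Real.rpow_mul ht0.le, mul_neg]
            simp_rw [this]
            rw [lintegral_const_mul _ (by fun_prop), hJ', ← mul_assoc,
              ← ENNReal.ofReal_mul (by positivity), ← Real.rpow_natCast, ← Real.rpow_add ht0,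
              hq, sub_eq_add_neg]
          · rw [Set.indicator_of_notMem (by exact htR)]
            have : ∀ x, {p : E × E | ‖p.2‖ ≤ R}.indicator
                (fun p => ENNReal.ofReal (‖F p‖ ^ (-(γ * m)))) (t * x, t) = 0 :=
              fun x => Set.indicator_of_notMem (by exact htR) _
            simp [this]
      _ = ENNReal.ofReal (C1 * R ^ (q + m)) := by
          rw [lintegral_mul_const _ (Measurable.indicator (by fun_prop) (hms2 R)),
            lintegral_indicator (hms2 R), hann, ← ENNReal.ofReal_mul' hJ0, hC1,
            Real.zero_rpow hqm0.ne']
          congr 1; ring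
      _ ≤ _ := by
          rw [hqm]
          refine ENNReal.ofReal_le_ofReal ?_
          gcongr; linarith
  · intro a b ha hab
    have hR0 : 0 < R := by linarith
    have hb : 0 < b := by linarith
    set S : Set ℝ := {r | a ≤ r ^ m ∧ r ^ m ≤ b} with hS
    have hSm : MeasurableSet S :=
      (measurableSet_le measurable_const (measurable_id.pow_const m)).inter
        (measurableSet_le (measurable_id.pow_const m) measurable_const)
    have hSF : MeasurableSet {p : E × E | a ≤ ‖F p‖ ^ m ∧ ‖F p‖ ^ m ≤ b} :=
      hSm.preimage hFm.norm
    have hT : MeasurableSet ({p : E × E | a ≤ ‖F p‖ ^ m ∧ ‖F p‖ ^ m ≤ b} ∩ localRegion F R) :=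
      hSF.inter (hms1 R)
    rw [Measure.restrict_apply hSF, ← lintegral_indicator_one hT,
      hton _ (measurable_one.indicator hT)]
    -- the weight `(R ^ d φ) ^ (η m) ≥ 1` is inserted before dropping the truncations
    set w : E → ENNReal := fun x => ENNReal.ofReal ((R ^ d * φ x) ^ (η * m)) with hw
    have hwm : Measurable w := by fun_prop
    have hkm : Measurable (fun z : E × E => S.indicator (fun _ => (1:ENNReal))
        (‖z.1‖ ^ d * φ z.2)) :=
      (measurable_const.indicator hSm).comp (by fun_prop)
    calc _ ≤ ∫⁻ t, ∫⁻ x, ENNReal.ofReal (‖t‖ ^ m) * (w x *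
              S.indicator (fun _ => 1) (‖t‖ ^ d * φ x)) ∂μ ∂μ := by
          refine lintegral_mono_ae ?_
          filter_upwards [Measure.ae_ne μ (0:E)] with t ht
          rw [← lintegral_const_mul _ (by fun_prop)]
          refine lintegral_mono fun x => ?_
          by_cases hp : (t * x, t) ∈
              {p : E × E | a ≤ ‖F p‖ ^ m ∧ ‖F p‖ ^ m ≤ b} ∩ localRegion F R
          · rw [Set.indicator_of_mem hp]
            obtain ⟨h1, h2, h3, h4⟩ := hp
            have e : ‖F (t * x, t)‖ = ‖t‖ ^ d * φ x := by
              rw [hF _ _ ht, mul_div_cancel_left₀ _ ht]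
            have h1' : ‖t‖ ^ d * φ x ∈ S := by rw [← e]; exact h1
            rw [Set.indicator_of_mem h1', mul_one]
            simp only [Pi.one_apply, mul_one]
            refine le_mul_of_one_le_right zero_le ?_
            rw [hw, ← ENNReal.ofReal_one]
            refine ENNReal.ofReal_le_ofReal (Real.one_le_rpow ?_ (by positivity))
            refine h4.trans ?_
            rw [e]
            have := hφ0 x
            have h3' : ‖t‖ ≤ R := h3
            gcongr
          · rw [Set.indicator_of_notMem hp, mul_zero]; exact zero_le
      _ = ∫⁻ x, ∫⁻ t, ENNReal.ofReal (‖t‖ ^ m) * (w x *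
              S.indicator (fun _ => 1) (‖t‖ ^ d * φ x)) ∂μ ∂μ := by
          refine lintegral_lintegral_swap (Measurable.aemeasurable ?_)
          exact (by fun_prop : Measurable fun z : E × E => ENNReal.ofReal (‖z.1‖ ^ m)).mul
            ((hwm.comp measurable_snd).mul hkm)
      _ ≤ ∫⁻ x, ENNReal.ofReal (R ^ (m * (d * η)) * (m * V / (m + m) *
            ((b - a) * a ^ (κ - 1)))) * ENNReal.ofReal (φ x ^ (-(γ * m))) ∂μ := by
          refine lintegral_mono fun x => ?_
          rcases (hφ0 x).eq_or_lt with h0 | hx0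
          · have : ∀ t : E, S.indicator (fun _ => (1:ENNReal)) (‖t‖ ^ d * φ x) = 0 := by
              intro t
              refine Set.indicator_of_notMem ?_ _
              rw [← h0, mul_zero]
              intro h
              have := h.1
              rw [zero_pow hm0] at this
              linarith
            simp [this]
          · set D : ℝ := ((d * m : ℕ) : ℝ) with hD
            have hD0 : 0 < D := by rw [hD]; exact_mod_cast Nat.mul_pos (by omega) (by omega)
            set P : ℝ := φ x ^ m with hP
            have hP0 : 0 < P := by positivity
            have hset : ∀ t : E, ‖t‖ ^ d * φ x ∈ S ↔
                (a / P) ^ (D⁻¹) ≤ ‖t‖ ∧ ‖t‖ ≤ (b / P) ^ (D⁻¹) := by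
              intro t
              rw [Real.rpow_inv_le_iff_of_pos (by positivity) (norm_nonneg _) hD0,
                Real.le_rpow_inv_iff_of_pos (norm_nonneg _) (by positivity) hD0,
                hD, Real.rpow_natCast, div_le_iff₀ hP0, le_div_iff₀ hP0, hS, hP, pow_mul,
                ← mul_pow]
              rfl
            set r1 := (a / P) ^ (D⁻¹) with hr1
            set r2 := (b / P) ^ (D⁻¹) with hr2
            have hann := lintegral_annulus μ m r1 r2 (by positivity)
              (Real.rpow_le_rpow (by positivity) (by gcongr) (by positivity)) (by positivity)
            have hTm : MeasurableSet {t : E | r1 ≤ ‖t‖ ∧ ‖t‖ ≤ r2} :=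
              (measurableSet_le measurable_const measurable_norm).inter
                (measurableSet_le measurable_norm measurable_const)
            have hDm : D⁻¹ * (m + m) = κ := by
              rw [hD, hκ]; push_cast; field_simp; ring
            have hpw : ∀ c : ℝ, 0 ≤ c → ((c / P) ^ (D⁻¹)) ^ ((m:ℝ) + m) = c ^ κ * P ^ (-κ) := by
              intro c hc
              rw [← Real.rpow_mul (by positivity), hDm, Real.div_rpow hc hP0.le,
                Real.rpow_neg hP0.le, div_eq_mul_inv]
            have hinner : ∫⁻ t, ENNReal.ofReal (‖t‖ ^ m) * (w x *
                S.indicator (fun _ => 1) (‖t‖ ^ d * φ x)) ∂μ =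
                w x * ENNReal.ofReal (m * V / (m + m) * ((b ^ κ - a ^ κ) * P ^ (-κ))) := by
              have : ∀ t : E, ENNReal.ofReal (‖t‖ ^ m) * (w x *
                S.indicator (fun _ => 1) (‖t‖ ^ d * φ x)) = w x *
                {t : E | r1 ≤ ‖t‖ ∧ ‖t‖ ≤ r2}.indicator
                  (fun t => ENNReal.ofReal (‖t‖ ^ (m:ℝ))) t := by
                intro t
                by_cases ht : ‖t‖ ^ d * φ x ∈ S
                · rw [Set.indicator_of_mem ht, Set.indicator_of_mem (by exact (hset t).1 ht),
                    mul_one, mul_comm, Real.rpow_natCast]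
                · rw [Set.indicator_of_notMem ht,
                    Set.indicator_of_notMem (show t ∉ {t : E | r1 ≤ ‖t‖ ∧ ‖t‖ ≤ r2} from
                      fun h => ht ((hset t).2 h)), mul_zero, mul_zero]
              simp_rw [this]
              rw [lintegral_const_mul _ (Measurable.indicator (by fun_prop) hTm),
                lintegral_indicator hTm, hann, hr1, hr2, hpw a ha.le, hpw b hb.le, ← sub_mul]
            -- `w x` turns the power `-κ m` of `φ x` into the integrable power `-(κ - η) m`
            rw [hinner, hw, ← ENNReal.ofReal_mul (by positivity),
              ← ENNReal.ofReal_mul' (by positivity)]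
            refine ENNReal.ofReal_le_ofReal ?_
            have hbern := rpow_sub_rpow_le κ a b hκ0.le hκ1 ha hab
            have e1 : (R ^ d * φ x) ^ (η * m) = R ^ (m * (d * η)) * φ x ^ (η * m) := by
              rw [Real.mul_rpow (by positivity) hx0.le, ← Real.rpow_natCast,
                ← Real.rpow_mul hR0.le]
              congr 2; ring
            have e2 : φ x ^ (-(γ * m)) = φ x ^ (η * m) * P ^ (-κ) := by
              rw [hP, ← Real.rpow_natCast, ← Real.rpow_mul hx0.le, ← Real.rpow_add hx0, hγ]
              congr 1; ring
            rw [e1, e2]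
            calc _ ≤ R ^ (m * (d * η)) * φ x ^ (η * m) * (m * V / (m + m) *
                    (((b - a) * a ^ (κ - 1)) * P ^ (-κ))) := by gcongr
              _ = _ := by ring
      _ = ENNReal.ofReal (C2 * R ^ (m * (d * η)) * ((b - a) * a ^ (κ - 1))) := by
          rw [lintegral_const_mul _ (by fun_prop), hJ', ← ENNReal.ofReal_mul' hJ0, hC2]
          congr 1; ring
      _ ≤ _ := by
          refine ENNReal.ofReal_le_ofReal ?_
          have hba : 0 ≤ b - a := by linarith
          gcongr
          linarith

end Local2

/-! ### Moment and shell bounds for products -/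

section Products

variable {Ω Ω' : Type*} [MeasurableSpace Ω] [MeasurableSpace Ω']

theorem MomentBound.transfer {μ : Measure Ω} {ν : Measure Ω'} (e : Ω ≃ᵐ Ω')
    (he : MeasurePreserving e μ ν) {y : Ω → ℝ} {y' : Ω' → ℝ} (hy : ∀ ω, y ω = y' (e ω))
    {κ M : ℝ} (h : MomentBound ν y' κ M) : MomentBound μ y κ M := by
  unfold MomentBound at *
  rw [← he.lintegral_comp_emb e.measurableEmbedding] at h
  simpa only [hy] using h

theorem ShellBound.transfer {μ : Measure Ω} {ν : Measure Ω'} (e : Ω ≃ᵐ Ω')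
    (he : MeasurePreserving e μ ν) {y : Ω → ℝ} {y' : Ω' → ℝ} (hy : ∀ ω, y ω = y' (e ω))
    {κ M : ℝ} (h : ShellBound ν y' κ M) : ShellBound μ y κ M := by
  intro a b ha hab
  refine le_trans (le_of_eq ?_) (h a b ha hab)
  rw [← he.measure_preimage_equiv]
  simp only [hy]
  rfl

theorem MomentBound.prod {μ : Measure Ω} {ν : Measure Ω'} [SFinite μ] [SFinite ν]
    {y : Ω → ℝ} {z : Ω' → ℝ} (hy : Measurable y) (hz : Measurable z)
    (hy0 : ∀ ω, 0 ≤ y ω) (hz0 : ∀ ω, 0 ≤ z ω) {κ M N : ℝ} (hM : 0 ≤ M)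
    (h1 : MomentBound μ y κ M) (h2 : MomentBound ν z κ N) :
    MomentBound (μ.prod ν) (fun p => y p.1 * z p.2) κ (M * N) := by
  unfold MomentBound at *
  calc _ = ∫⁻ p : Ω × Ω', ENNReal.ofReal (y p.1 ^ (-κ)) * ENNReal.ofReal (z p.2 ^ (-κ))
            ∂(μ.prod ν) := by
        refine lintegral_congr fun p => ?_
        rw [Real.mul_rpow (hy0 _) (hz0 _), ENNReal.ofReal_mul (Real.rpow_nonneg (hy0 _) _)]
    _ = (∫⁻ ω, ENNReal.ofReal (y ω ^ (-κ)) ∂μ) * ∫⁻ ω, ENNReal.ofReal (z ω ^ (-κ)) ∂ν :=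
        lintegral_prod_mul (f := fun ω => ENNReal.ofReal (y ω ^ (-κ)))
          (g := fun ω => ENNReal.ofReal (z ω ^ (-κ))) (by fun_prop) (by fun_prop)
    _ ≤ _ := by
        rw [ENNReal.ofReal_mul hM]
        gcongr

/-- Slicing along the second factor: where `z ω' > 0` the slice is a shell for `y` with endpoints
divided by `z ω'`, and the resulting factor `z ω' ^ (-κ)` is integrated by the moment bound. -/
theorem ShellBound.prod_moment {μ : Measure Ω} {ν : Measure Ω'} [SFinite μ] [SFinite ν]
    {y : Ω → ℝ} {z : Ω' → ℝ} (hy : Measurable y) (hz : Measurable z)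
    (hz0 : ∀ ω, 0 ≤ z ω) {κ M N : ℝ} (hM : 0 ≤ M)
    (h1 : ShellBound μ y κ M) (h2 : MomentBound ν z κ N) :
    ShellBound (μ.prod ν) (fun p => y p.1 * z p.2) κ (M * N) := by
  intro a b ha hab
  have hyz : Measurable fun p : Ω × Ω' => y p.1 * z p.2 := by fun_prop
  have hms : MeasurableSet {p : Ω × Ω' | a ≤ y p.1 * z p.2 ∧ y p.1 * z p.2 ≤ b} :=
    (measurableSet_le measurable_const hyz).inter (measurableSet_le hyz measurable_const)
  have hba : 0 ≤ b - a := by linarith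
  have hc : 0 ≤ M * ((b - a) * a ^ (κ - 1)) := by positivity
  rw [Measure.prod_apply_symm hms]
  calc _ ≤ ∫⁻ ω, ENNReal.ofReal (M * ((b - a) * a ^ (κ - 1))) *
            ENNReal.ofReal (z ω ^ (-κ)) ∂ν := by
        refine lintegral_mono fun ω => ?_
        rcases (hz0 ω).eq_or_lt with h0 | hpos
        · have : (fun x => (x, ω)) ⁻¹' {p : Ω × Ω' | a ≤ y p.1 * z p.2 ∧ y p.1 * z p.2 ≤ b}
              = ∅ := by
            ext x
            simp only [Set.mem_preimage, Set.mem_ofPred_eq, Set.mem_empty_iff_false, iff_false,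
              ← h0, mul_zero]
            intro h
            linarith [h.1]
          rw [this, measure_empty]
          exact zero_le
        · have : (fun x => (x, ω)) ⁻¹' {p : Ω × Ω' | a ≤ y p.1 * z p.2 ∧ y p.1 * z p.2 ≤ b}
              = {x | a / z ω ≤ y x ∧ y x ≤ b / z ω} := by
            ext x
            simp only [Set.mem_preimage, Set.mem_ofPred_eq, div_le_iff₀ hpos, le_div_iff₀ hpos]
          rw [this]
          refine (h1 _ _ (by positivity) (by gcongr)).trans (le_of_eq ?_)
          rw [← ENNReal.ofReal_mul hc, Real.div_rpow ha.le hpos.le, Real.rpow_neg hpos.le,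
            Real.rpow_sub_one hpos.ne']
          congr 1
          have := (Real.rpow_pos_of_pos hpos κ).ne'
          field_simp
    _ = ENNReal.ofReal (M * ((b - a) * a ^ (κ - 1))) *
          ∫⁻ ω, ENNReal.ofReal (z ω ^ (-κ)) ∂ν := lintegral_const_mul _ (by fun_prop)
    _ ≤ ENNReal.ofReal (M * ((b - a) * a ^ (κ - 1))) * ENNReal.ofReal N := by gcongr; exact h2
    _ = _ := by rw [← ENNReal.ofReal_mul hc]; congr 1; ring

theorem MomentBound.prod_shell {μ : Measure Ω} {ν : Measure Ω'} [SFinite μ] [SFinite ν]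
    {y : Ω → ℝ} {z : Ω' → ℝ} (hy : Measurable y) (hz : Measurable z)
    (hy0 : ∀ ω, 0 ≤ y ω) {κ M N : ℝ} (hN : 0 ≤ N)
    (h1 : MomentBound μ y κ M) (h2 : ShellBound ν z κ N) :
    ShellBound (μ.prod ν) (fun p => y p.1 * z p.2) κ (M * N) := by
  rw [mul_comm M]
  exact (ShellBound.prod_moment hz hy hy0 hN h2 h1).transfer MeasurableEquiv.prodComm
    Measure.measurePreserving_swap fun p => mul_comm _ _

theorem MomentBound.pi_fin {k : ℕ} (μ : Fin k → Measure Ω) [∀ i, SigmaFinite (μ i)]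
    (y : Fin k → Ω → ℝ) (hy : ∀ i, Measurable (y i)) (hy0 : ∀ i ω, 0 ≤ y i ω) (κ M : ℝ)
    (hM : 0 ≤ M) (h : ∀ i, MomentBound (μ i) (y i) κ M) :
    MomentBound (Measure.pi μ) (fun ω => ∏ i, y i (ω i)) κ (M ^ k) := by
  induction k with
  | zero => simp [MomentBound]
  | succ k ih =>
    rw [pow_succ']
    refine (MomentBound.prod (μ := μ 0) (ν := Measure.pi fun j => μ (Fin.succ j)) (hy 0)
      (z := fun ω => ∏ i, y (Fin.succ i) (ω i))
      (Finset.measurable_fun_prod _ fun i _ => (hy _).comp (measurable_pi_apply i)) (hy0 0)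
      (fun ω => Finset.prod_nonneg fun i _ => hy0 _ _) hM (h 0)
      (ih _ _ (fun i => hy _) (fun i => hy0 _) fun i => h _)).transfer
      (MeasurableEquiv.piFinSuccAbove (fun _ => Ω) 0)
      (by simpa using measurePreserving_piFinSuccAbove μ 0) fun ω => ?_
    rw [Fin.prod_univ_succ]
    rfl

theorem ShellBound.pi_fin {k : ℕ} (μ : Fin (k + 1) → Measure Ω) [∀ i, SigmaFinite (μ i)]
    (y : Fin (k + 1) → Ω → ℝ) (hy : ∀ i, Measurable (y i)) (hy0 : ∀ i ω, 0 ≤ y i ω) (κ M : ℝ)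
    (hM : 0 ≤ M) (h : ∀ i, MomentBound (μ i) (y i) κ M) (h' : ∀ i, ShellBound (μ i) (y i) κ M) :
    ShellBound (Measure.pi μ) (fun ω => ∏ i, y i (ω i)) κ (M ^ (k + 1)) := by
  rw [pow_succ']
  refine (ShellBound.prod_moment (μ := μ 0) (ν := Measure.pi fun j => μ (Fin.succ j)) (hy 0)
    (z := fun ω => ∏ i, y (Fin.succ i) (ω i))
    (Finset.measurable_fun_prod _ fun i _ => (hy _).comp (measurable_pi_apply i))
    (fun ω => Finset.prod_nonneg fun i _ => hy0 _ _) hM (h' 0)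
    (MomentBound.pi_fin _ _ (fun i => hy _) (fun i => hy0 _) κ M hM fun i => h _)).transfer
    (MeasurableEquiv.piFinSuccAbove (fun _ => Ω) 0)
    (by simpa using measurePreserving_piFinSuccAbove μ 0) fun ω => ?_
  rw [Fin.prod_univ_succ]
  rfl

theorem MomentBound.pi {ι : Type*} [Fintype ι] (μ : ι → Measure Ω) [∀ i, SigmaFinite (μ i)]
    (y : ι → Ω → ℝ) (hy : ∀ i, Measurable (y i)) (hy0 : ∀ i ω, 0 ≤ y i ω) (κ M : ℝ)
    (hM : 0 ≤ M) (h : ∀ i, MomentBound (μ i) (y i) κ M) :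
    MomentBound (Measure.pi μ) (fun ω => ∏ i, y i (ω i)) κ (M ^ Fintype.card ι) := by
  set e := (Fintype.equivFin ι).symm
  refine (MomentBound.pi_fin (fun i => μ (e i)) (fun i => y (e i)) (fun i => hy _)
    (fun i => hy0 _) κ M hM fun i => h _).transfer
    (MeasurableEquiv.piCongrLeft (fun _ => Ω) e).symm
    (measurePreserving_piCongrLeft μ e).symm fun ω => ?_
  rw [← e.prod_comp]
  rfl

theorem ShellBound.pi {ι : Type*} [Fintype ι] [Nonempty ι] (μ : ι → Measure Ω)
    [∀ i, SigmaFinite (μ i)]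
    (y : ι → Ω → ℝ) (hy : ∀ i, Measurable (y i)) (hy0 : ∀ i ω, 0 ≤ y i ω) (κ M : ℝ)
    (hM : 0 ≤ M) (h : ∀ i, MomentBound (μ i) (y i) κ M) (h' : ∀ i, ShellBound (μ i) (y i) κ M) :
    ShellBound (Measure.pi μ) (fun ω => ∏ i, y i (ω i)) κ (M ^ Fintype.card ι) := by
  obtain ⟨k, hk⟩ := Nat.exists_eq_succ_of_ne_zero (Fintype.card_ne_zero (α := ι))
  set e := (Fintype.equivFinOfCardEq hk).symm
  rw [hk]
  refine (ShellBound.pi_fin (fun i => μ (e i)) (fun i => y (e i)) (fun i => hy _)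
    (fun i => hy0 _) κ M hM (fun i => h _) fun i => h' _).transfer
    (MeasurableEquiv.piCongrLeft (fun _ => Ω) e).symm
    (measurePreserving_piCongrLeft μ e).symm fun ω => ?_
  rw [← e.prod_comp]
  rfl

end Products

/-! ### Dehomogenization of binary forms -/

section Dehomogenization

variable {R : Type*} [CommRing R]

/-- The dehomogenization `F(x, 1)` of a binary form `F`. -/
noncomputable def dehom (F : MvPolynomial (Fin 2) R) : Polynomial R :=
  MvPolynomial.aeval ![Polynomial.X, 1] F

theorem dehom_map {R' : Type*} [CommRing R'] (φ : R →+* R') (F : MvPolynomial (Fin 2) R) :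
    dehom (F.map φ) = (dehom F).map φ := by
  unfold dehom
  induction F using MvPolynomial.induction_on with
  | C a => simp
  | add p q hp hq => simp [hp, hq]
  | mul_X p i hp =>
    simp only [map_mul, hp, Polynomial.map_mul]
    fin_cases i <;> simp

theorem eval_dehom (F : MvPolynomial (Fin 2) R) (x : R) :
    (dehom F).eval x = MvPolynomial.eval ![x, 1] F := by
  unfold dehom
  induction F using MvPolynomial.induction_on with
  | C a => simp
  | add p q hp hq => simp [hp, hq]
  | mul_X p i hp =>
    simp only [map_mul, hp, Polynomial.eval_mul]
    fin_cases i <;> simp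

theorem IsHomogeneous.add_eq {F : MvPolynomial (Fin 2) R} {d : ℕ} (hF : F.IsHomogeneous d)
    {k : Fin 2 →₀ ℕ} (hk : k ∈ F.support) : k 0 + k 1 = d := by
  have := hF.degree_eq_sum_deg_support hk
  rw [Finset.sum_subset (Finset.subset_univ _) (fun i _ hi => Finsupp.notMem_support_iff.1 hi),
    Fin.sum_univ_two] at this
  exact this.symm

theorem eval_smul_form {F : MvPolynomial (Fin 2) R} {d : ℕ} (hF : F.IsHomogeneous d) (t s u : R) :
    MvPolynomial.eval ![t * s, t * u] F = t ^ d * MvPolynomial.eval ![s, u] F := by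
  rw [MvPolynomial.eval_eq', MvPolynomial.eval_eq', Finset.mul_sum]
  refine Finset.sum_congr rfl fun k hk => ?_
  rw [← IsHomogeneous.add_eq hF hk]
  simp only [Fin.prod_univ_two, Matrix.cons_val_zero, Matrix.cons_val_one]
  ring

theorem eval_form_eq {k : Type*} [Field k] {F : MvPolynomial (Fin 2) k} {d : ℕ}
    (hF : F.IsHomogeneous d) (s t : k) (ht : t ≠ 0) :
    MvPolynomial.eval ![s, t] F = t ^ d * (dehom F).eval (s / t) := by
  rw [eval_dehom, ← eval_smul_form hF, mul_one, mul_div_cancel₀ _ ht]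

theorem dehom_eq_sum (F : MvPolynomial (Fin 2) R) :
    dehom F = ∑ k ∈ F.support, Polynomial.C (F.coeff k) * Polynomial.X ^ (k 0) := by
  rw [dehom, MvPolynomial.aeval_def, MvPolynomial.eval₂_eq']
  refine Finset.sum_congr rfl fun k _ => ?_
  simp [Fin.prod_univ_two]

theorem natDegree_dehom_le {F : MvPolynomial (Fin 2) R} {d : ℕ} (hF : F.IsHomogeneous d) :
    (dehom F).natDegree ≤ d := by
  rw [dehom_eq_sum]
  refine Polynomial.natDegree_sum_le_of_forall_le _ _ fun k hk => ?_
  refine (Polynomial.natDegree_C_mul_X_pow_le _ _).trans ?_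
  have := IsHomogeneous.add_eq hF hk
  omega

/-- The coefficient of `x ^ d` in `F(x, 1)` is `F(1, 0)`; it vanishes exactly if `t` divides `F`. -/
theorem coeff_dehom {F : MvPolynomial (Fin 2) R} {d : ℕ} (hF : F.IsHomogeneous d) :
    (dehom F).coeff d = MvPolynomial.eval ![1, 0] F := by
  rw [dehom_eq_sum, MvPolynomial.eval_eq', Polynomial.finsetSum_coeff]
  refine Finset.sum_congr rfl fun k hk => ?_
  have := IsHomogeneous.add_eq hF hk
  rw [Polynomial.coeff_C_mul_X_pow]
  simp only [Fin.prod_univ_two, Matrix.cons_val_zero, Matrix.cons_val_one, one_pow, one_mul]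
  by_cases h : k 1 = 0
  · rw [if_pos (by omega), h, pow_zero, mul_one]
  · rw [if_neg (by omega), zero_pow h, mul_zero]

theorem natDegree_dehom {F : MvPolynomial (Fin 2) R} {d : ℕ} (hF : F.IsHomogeneous d)
    (h : MvPolynomial.eval ![1, 0] F ≠ 0) : (dehom F).natDegree = d :=
  le_antisymm (natDegree_dehom_le hF)
    (Polynomial.le_natDegree_of_ne_zero (by rwa [coeff_dehom hF]))

/-- The binary form of degree `n` with dehomogenization `g`, provided `g.natDegree ≤ n`. -/
noncomputable def homog (n : ℕ) (g : Polynomial R) : MvPolynomial (Fin 2) R :=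
  ∑ k ∈ Finset.range (n + 1), MvPolynomial.C (g.coeff k) * (MvPolynomial.X 0 ^ k *
    MvPolynomial.X 1 ^ (n - k))

theorem homog_isHomogeneous (n : ℕ) (g : Polynomial R) : (homog n g).IsHomogeneous n := by
  refine MvPolynomial.IsHomogeneous.sum _ _ _ fun k hk => ?_
  have hk' : 0 + (1 * k + 1 * (n - k)) = n := by
    have := Finset.mem_range.1 hk
    omega
  have h := (MvPolynomial.isHomogeneous_C (Fin 2) (g.coeff k)).mul
    (((MvPolynomial.isHomogeneous_X R (0 : Fin 2)).pow k).mul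
      ((MvPolynomial.isHomogeneous_X R (1 : Fin 2)).pow (n - k)))
  rwa [hk'] at h

theorem dehom_homog (g : Polynomial R) : dehom (homog g.natDegree g) = g := by
  conv_rhs => rw [g.as_sum_range_C_mul_X_pow]
  unfold dehom homog
  simp [map_sum]

theorem dehom_mul (F G : MvPolynomial (Fin 2) R) : dehom (F * G) = dehom F * dehom G := by
  simp [dehom]

/-- A binary form of known degree is determined by its dehomogenization. -/
theorem form_ext {k : Type*} [Field k] [Infinite k] {F G : MvPolynomial (Fin 2) k} {d : ℕ}
    (hF : F.IsHomogeneous d) (hG : G.IsHomogeneous d) (h : dehom F = dehom G) : F = G := by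
  -- the factor `X 1` makes the two sides agree on the line `t = 0`
  have : (F - G) * MvPolynomial.X 1 = 0 := by
    refine MvPolynomial.funext fun x => ?_
    rw [map_mul, MvPolynomial.eval_X, map_sub, map_zero]
    by_cases hx : x 1 = 0
    · rw [hx, mul_zero]
    · have e : x = ![x 0, x 1] := by ext i; fin_cases i <;> rfl
      rw [e, eval_form_eq hF _ _ hx, eval_form_eq hG _ _ hx, h, sub_self, zero_mul]
  rcases mul_eq_zero.1 this with h | h
  · exact sub_eq_zero.1 h
  · exact absurd h (MvPolynomial.X_ne_zero _)

/-- A factorization of `F(x, 1)` homogenizes to a factorization of `F`. -/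
theorem irreducible_dehom {k : Type*} [Field k] [Infinite k] {F : MvPolynomial (Fin 2) k} {d : ℕ}
    (hF : F.IsHomogeneous d) (hd : 0 < d) (h : MvPolynomial.eval ![1, 0] F ≠ 0)
    (hirr : Irreducible F) : Irreducible (dehom F) := by
  have hdeg := natDegree_dehom hF h
  have hne : dehom F ≠ 0 := by
    intro h0
    rw [h0, Polynomial.natDegree_zero] at hdeg
    omega
  refine ⟨fun hu => ?_, fun g g' hgg => ?_⟩
  · have := Polynomial.natDegree_eq_zero_of_isUnit hu
    omega
  · have hg0 : g ≠ 0 := by rintro rfl; exact hne (by rw [hgg, zero_mul])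
    have hg0' : g' ≠ 0 := by rintro rfl; exact hne (by rw [hgg, mul_zero])
    have hsum : g.natDegree + g'.natDegree = d := by
      rw [← Polynomial.natDegree_mul hg0 hg0', ← hgg, hdeg]
    have hG : (homog g.natDegree g * homog g'.natDegree g').IsHomogeneous d := by
      rw [← hsum]
      exact (homog_isHomogeneous _ _).mul (homog_isHomogeneous _ _)
    have hFG : F = homog g.natDegree g * homog g'.natDegree g' :=
      form_ext hF hG (by rw [dehom_mul, dehom_homog, dehom_homog, hgg])
    rcases hirr.isUnit_or_isUnit hFG with hu | hu
    · left
      rw [← dehom_homog g]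
      exact hu.map (MvPolynomial.aeval ![Polynomial.X, (1 : Polynomial k)])
    · right
      rw [← dehom_homog g']
      exact hu.map (MvPolynomial.aeval ![Polynomial.X, (1 : Polynomial k)])

end Dehomogenization

/-! ### Local bounds for an irreducible form -/

section LocalForm

variable {K : Type*} [Field K] [NumberField K]

/-- The exponent `κ` of the moment and shell bounds for a form of degree `d`. -/
noncomputable def shellExp (d : ℕ) : ℝ := if d = 1 then 1 else 2 / d

/-- The bounds for a form of degree `d` over a box of size `R` at a place of local degree `m` carry
the factor `R ^ (m * lossExp d η)`. -/
noncomputable def lossExp (d : ℕ) (η : ℝ) : ℝ := if d = 1 then 1 + η else d * η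

/-- A form irreducible over `K` has a separable dehomogenization over `K`, hence over every extension
of `K`. Since `t` does not divide `F`, no degree is lost. -/
theorem separable_dehom {F : MvPolynomial (Fin 2) (𝓞 K)} {d : ℕ} (hF : F.IsHomogeneous d)
    (hd : 0 < d) (h : MvPolynomial.eval ![1, 0] F ≠ 0)
    (hirr : Irreducible (F.map (algebraMap (𝓞 K) K))) {L : Type*} [Field L] (ψ : K →+* L) :
    (dehom (F.map (ψ.comp (algebraMap (𝓞 K) K)))).Separable ∧
      (dehom (F.map (ψ.comp (algebraMap (𝓞 K) K)))).natDegree = d := by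
  have hFK := hF.map (algebraMap (𝓞 K) K)
  have h' : MvPolynomial.eval ![1, 0] (F.map (algebraMap (𝓞 K) K)) ≠ 0 := by
    rw [← coeff_dehom hFK, dehom_map, Polynomial.coeff_map, coeff_dehom hF]
    simpa using h
  rw [← MvPolynomial.map_map, dehom_map ψ]
  exact ⟨(irreducible_dehom hFK hd h' hirr).separable.map,
    by rw [Polynomial.natDegree_map, natDegree_dehom hFK h']⟩

theorem measurable_form {E : Type*} [NormedField E] [MeasurableSpace E] [BorelSpace E]
    [SecondCountableTopology E] (F : MvPolynomial (Fin 2) E) :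
    Measurable fun p : E × E => MvPolynomial.eval ![p.1, p.2] F := by
  refine Continuous.measurable ?_
  refine (MvPolynomial.continuous_eval F).comp ?_
  refine continuous_pi fun i => ?_
  fin_cases i
  · exact continuous_fst
  · exact continuous_snd

/-- The moment and shell bounds at one place, given by `ψ : K → E` with `E = ℝ` or `E = ℂ`. -/
theorem local_bounds {E : Type*} [NormedField E] [NormedAlgebra ℝ E] [FiniteDimensional ℝ E]
    [MeasurableSpace E] [BorelSpace E] [SecondCountableTopology E]
    (μ : Measure E) [μ.IsAddHaarMeasure]
    (hdet : ∀ t : E, |LinearMap.det (LinearMap.mulLeft ℝ t)| = ‖t‖ ^ Module.finrank ℝ E)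
    (ι : E →+* ℂ) (hι : ∀ x, ‖ι x‖ = ‖x‖) (ρ : ℂ → E) (hρ : ∀ x z, ‖x - ρ z‖ ≤ ‖ι x - z‖)
    {F : MvPolynomial (Fin 2) (𝓞 K)} {d : ℕ} (hF : F.IsHomogeneous d)
    (hd : 0 < d) (h : MvPolynomial.eval ![1, 0] F ≠ 0)
    (hirr : Irreducible (F.map (algebraMap (𝓞 K) K))) (ψ : K →+* E)
    (η : ℝ) (hη0 : 0 < η) (hη1 : d * η < 1) :
    ∃ C : ℝ, 0 < C ∧ ∀ R : ℝ, 1 ≤ R →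
      MomentBound ((μ.prod μ).restrict (localRegion (fun p : E × E =>
          MvPolynomial.eval ![p.1, p.2] (F.map (ψ.comp (algebraMap (𝓞 K) K)))) R))
        (fun p => ‖MvPolynomial.eval ![p.1, p.2] (F.map (ψ.comp (algebraMap (𝓞 K) K)))‖ ^
          Module.finrank ℝ E) (shellExp d)
        (C * R ^ (Module.finrank ℝ E * lossExp d η)) ∧
      ShellBound ((μ.prod μ).restrict (localRegion (fun p : E × E =>
          MvPolynomial.eval ![p.1, p.2] (F.map (ψ.comp (algebraMap (𝓞 K) K)))) R))
        (fun p => ‖MvPolynomial.eval ![p.1, p.2] (F.map (ψ.comp (algebraMap (𝓞 K) K)))‖ ^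
          Module.finrank ℝ E) (shellExp d)
        (C * R ^ (Module.finrank ℝ E * lossExp d η)) := by
  set FE := F.map (ψ.comp (algebraMap (𝓞 K) K)) with hFE
  have hFEh : FE.IsHomogeneous d := hF.map _
  have hFm := measurable_form FE
  obtain ⟨-, hdeg⟩ := separable_dehom hF hd h hirr ψ
  rw [← hFE] at hdeg
  rcases (Nat.succ_le_of_lt hd).eq_or_lt with h1 | h2
  · obtain rfl : d = 1 := h1.symm
    obtain ⟨α, hα, β, hαβ⟩ := Polynomial.natDegree_eq_one.1 hdeg
    simp only [shellExp, lossExp, if_true]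
    refine local_bounds_one μ hdet _ hFm α β hα (fun s t ht => ?_) η hη0 (by simpa using hη1)
    change MvPolynomial.eval ![s, t] FE = _
    rw [eval_form_eq hFEh s t ht, ← hαβ]
    simp only [pow_one, Polynomial.eval_add, Polynomial.eval_mul, Polynomial.eval_C,
      Polynomial.eval_X]
    field_simp
  · have hd1 : d ≠ 1 := by omega
    have h2' : (2:ℝ) ≤ d := by exact_mod_cast h2
    simp only [shellExp, lossExp, if_neg hd1]
    obtain ⟨hsep, hdegC⟩ := separable_dehom hF hd h hirr (ι.comp ψ)
    have hmap : dehom (F.map ((ι.comp ψ).comp (algebraMap (𝓞 K) K))) = (dehom FE).map ι := by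
      rw [RingHom.comp_assoc, ← MvPolynomial.map_map, dehom_map ι]
    rw [hmap] at hsep hdegC
    have heval : ∀ x, ‖((dehom FE).map ι).eval (ι x)‖ = ‖(dehom FE).eval x‖ := by
      intro x
      rw [Polynomial.eval_map_apply, hι]
    have hd0 : (0:ℝ) < d := by linarith
    refine local_bounds_two μ hdet _ hFm (fun x => ‖(dehom FE).eval x‖) ?_
      (fun x => norm_nonneg _) d h2 (fun s t ht => ?_) η hη0 ?_
    · exact (dehom FE).continuous.measurable.norm
    · change ‖MvPolynomial.eval ![s, t] FE‖ = _
      rw [eval_form_eq hFEh s t ht, norm_mul, norm_pow]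
    · have := lintegral_poly_lt_top μ ι hι ρ hρ _ hsep (by omega) (2 / d - η)
        (by rw [sub_pos, lt_div_iff₀ hd0]; linarith)
        (by
          have : (2:ℝ) / d ≤ 1 := by rw [div_le_one hd0]; exact h2'
          linarith)
        (by
          rw [hdegC, mul_sub, mul_div_cancel₀ _ hd0.ne']; linarith)
      simpa only [heval] using this

end LocalForm

/-! ### From the places to `K_∞` -/

section Assembly

theorem MomentBound.mono {Ω : Type*} [MeasurableSpace Ω] {μ : Measure Ω} {y : Ω → ℝ} {κ M N : ℝ}
    (h : MomentBound μ y κ M) (hMN : M ≤ N) : MomentBound μ y κ N :=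
  h.trans (ENNReal.ofReal_le_ofReal hMN)

theorem ShellBound.mono {Ω : Type*} [MeasurableSpace Ω] {μ : Measure Ω} {y : Ω → ℝ} {κ M N : ℝ}
    (h : ShellBound μ y κ M) (hMN : M ≤ N) : ShellBound μ y κ N := by
  intro a b ha hab
  refine (h a b ha hab).trans (ENNReal.ofReal_le_ofReal ?_)
  have : 0 ≤ b - a := by linarith
  gcongr

/-- Interchanging the two inner factors of a product of four measure spaces. -/
theorem measurePreserving_prodProdComm (α β γ δ : Type*) [MeasureSpace α] [MeasureSpace β]
    [MeasureSpace γ] [MeasureSpace δ] [SigmaFinite (volume : Measure α)]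
    [SigmaFinite (volume : Measure β)] [SigmaFinite (volume : Measure γ)]
    [SigmaFinite (volume : Measure δ)] :
    MeasurePreserving (fun p : (α × β) × (γ × δ) => ((p.1.1, p.2.1), (p.1.2, p.2.2)))
      volume volume := by
  have h1 := volume_preserving_prodAssoc (α₁ := α) (β₁ := β) (γ₁ := γ × δ)
  have h2 := (volume_preserving_prodAssoc (α₁ := β) (β₁ := γ) (γ₁ := δ)).symm
  have h3 : MeasurePreserving (Prod.swap : β × γ → γ × β) volume volume :=
    Measure.measurePreserving_swap
  have h4 := volume_preserving_prodAssoc (α₁ := γ) (β₁ := β) (γ₁ := δ)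
  have h5 := (volume_preserving_prodAssoc (α₁ := α) (β₁ := γ) (γ₁ := β × δ)).symm
  have h6 := h4.comp ((h3.prod (MeasurePreserving.id (volume : Measure δ))).comp h2)
  exact h5.comp (((MeasurePreserving.id (volume : Measure α)).prod h6).comp h1)

/-- The shell estimate for a product of functions of independent pairs of coordinates, one pair for
each real and each complex place. The pairs are the coordinates at the same place of the two
components of a point of `K_∞ × K_∞`. -/
theorem shell_volume {ι ι' : Type*} [Fintype ι] [Fintype ι'] (hne : Nonempty ι ∨ Nonempty ι')
    (y : ι → ℝ × ℝ → ℝ) (z : ι' → ℂ × ℂ → ℝ) (hy : ∀ w, Measurable (y w))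
    (hz : ∀ w, Measurable (z w)) (hy0 : ∀ w p, 0 ≤ y w p) (hz0 : ∀ w p, 0 ≤ z w p)
    (U : ι → Set (ℝ × ℝ)) (V : ι' → Set (ℂ × ℂ)) (hU : ∀ w, MeasurableSet (U w))
    (hV : ∀ w, MeasurableSet (V w)) (κ M N : ℝ) (hM : 0 ≤ M) (hN : 0 ≤ N)
    (hy1 : ∀ w, MomentBound (volume.restrict (U w)) (y w) κ M)
    (hy2 : ∀ w, ShellBound (volume.restrict (U w)) (y w) κ M)
    (hz1 : ∀ w, MomentBound (volume.restrict (V w)) (z w) κ N)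
    (hz2 : ∀ w, ShellBound (volume.restrict (V w)) (z w) κ N)
    (a b : ℝ) (ha : 0 < a) (hab : a ≤ b) :
    volume {p : ((ι → ℝ) × (ι' → ℂ)) × ((ι → ℝ) × (ι' → ℂ)) |
      ((∀ w, (p.1.1 w, p.2.1 w) ∈ U w) ∧ ∀ w, (p.1.2 w, p.2.2 w) ∈ V w) ∧
      a ≤ (∏ w, y w (p.1.1 w, p.2.1 w)) * ∏ w, z w (p.1.2 w, p.2.2 w) ∧
      (∏ w, y w (p.1.1 w, p.2.1 w)) * ∏ w, z w (p.1.2 w, p.2.2 w) ≤ b} ≤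
    ENNReal.ofReal (M ^ Fintype.card ι * N ^ Fintype.card ι' * ((b - a) * a ^ (κ - 1))) := by
  have hY : Measurable fun x : ι → ℝ × ℝ => ∏ w, y w (x w) :=
    Finset.measurable_fun_prod _ fun w _ => (hy w).comp (measurable_pi_apply w)
  have hZ : Measurable fun x : ι' → ℂ × ℂ => ∏ w, z w (x w) :=
    Finset.measurable_fun_prod _ fun w _ => (hz w).comp (measurable_pi_apply w)
  have hY0 : ∀ x : ι → ℝ × ℝ, 0 ≤ ∏ w, y w (x w) :=
    fun x => Finset.prod_nonneg fun w _ => hy0 _ _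
  have hZ0 : ∀ x : ι' → ℂ × ℂ, 0 ≤ ∏ w, z w (x w) :=
    fun x => Finset.prod_nonneg fun w _ => hz0 _ _
  have hshell : ShellBound ((Measure.pi fun w => volume.restrict (U w)).prod
      (Measure.pi fun w => volume.restrict (V w)))
      (fun q : (ι → ℝ × ℝ) × (ι' → ℂ × ℂ) => (∏ w, y w (q.1 w)) * ∏ w, z w (q.2 w)) κ
      (M ^ Fintype.card ι * N ^ Fintype.card ι') := by
    have m1 := MomentBound.pi _ y hy hy0 κ M hM hy1
    have m2 := MomentBound.pi _ z hz hz0 κ N hN hz1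
    rcases hne with hne | hne
    · exact ShellBound.prod_moment hY hZ hZ0 (by positivity)
        (ShellBound.pi _ y hy hy0 κ M hM hy1 hy2) m2
    · exact MomentBound.prod_shell hY hZ hY0 (by positivity) m1
        (ShellBound.pi _ z hz hz0 κ N hN hz1 hz2)
  have hg : MeasurePreserving
      (fun p : ((ι → ℝ) × (ι' → ℂ)) × ((ι → ℝ) × (ι' → ℂ)) =>
        ((fun w => (p.1.1 w, p.2.1 w), fun w => (p.1.2 w, p.2.2 w)) :
          (ι → ℝ × ℝ) × (ι' → ℂ × ℂ))) volume volume :=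
    ((volume_measurePreserving_arrowProdEquivProdArrow ℝ ℝ ι).symm.prod
      (volume_measurePreserving_arrowProdEquivProdArrow ℂ ℂ ι').symm).comp
      (measurePreserving_prodProdComm (ι → ℝ) (ι' → ℂ) (ι → ℝ) (ι' → ℂ))
  set f : (ι → ℝ × ℝ) × (ι' → ℂ × ℂ) → ℝ :=
    fun q => (∏ w, y w (q.1 w)) * ∏ w, z w (q.2 w) with hf
  have hfm : Measurable f := (hY.comp measurable_fst).mul (hZ.comp measurable_snd)
  have hBox : MeasurableSet ((Set.univ.pi U) ×ˢ (Set.univ.pi V)) :=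
    (MeasurableSet.univ_pi hU).prod (MeasurableSet.univ_pi hV)
  have hSh : MeasurableSet {q | a ≤ f q ∧ f q ≤ b} :=
    (measurableSet_le measurable_const hfm).inter (measurableSet_le hfm measurable_const)
  have key := hshell a b ha hab
  rw [← Measure.restrict_pi_pi, ← Measure.restrict_pi_pi, Measure.prod_restrict,
    Measure.restrict_apply hSh] at key
  have e := hg.measure_preimage (hSh.inter hBox).nullMeasurableSet
  refine le_trans (le_of_eq ?_) (e.trans_le key)
  congr 1
  ext p
  simp only [Set.mem_preimage, Set.mem_inter_iff, Set.mem_ofPred_eq, Set.mem_prod, Set.mem_pi,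
    Set.mem_univ, true_implies]
  tauto

end Assembly

section Final

variable {K : Type*} [Field K] [NumberField K]

/-- The compact box `D` is bounded. -/
theorem BoxData.exists_bound (B : BoxData K) : ∃ C0 : ℝ, 1 ≤ C0 ∧ ∀ p ∈ B.D,
    (∀ w, ‖p.1.1 w‖ ≤ C0 ∧ ‖p.2.1 w‖ ≤ C0) ∧ ∀ w, ‖p.1.2 w‖ ≤ C0 ∧ ‖p.2.2 w‖ ≤ C0 := by
  have hsR : ∀ w, 0 ≤ |(B.ctrR w).1| + |(B.ctrR w).2| + B.radR w := fun w => by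
    have := (B.radR_pos w).le
    positivity
  have hsC : ∀ w, 0 ≤ ‖(B.ctrC w).1‖ + ‖(B.ctrC w).2‖ + B.radC w := fun w => by
    have := (B.radC_pos w).le
    positivity
  set SR := ∑ w, (|(B.ctrR w).1| + |(B.ctrR w).2| + B.radR w) with hSR
  set SC := ∑ w, (‖(B.ctrC w).1‖ + ‖(B.ctrC w).2‖ + B.radC w) with hSC
  have hSR0 : 0 ≤ SR := Finset.sum_nonneg fun w _ => hsR w
  have hSC0 : 0 ≤ SC := Finset.sum_nonneg fun w _ => hsC w
  refine ⟨1 + SR + SC, by linarith, fun p hp => ⟨fun w => ?_, fun w => ?_⟩⟩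
  · have h1 := Finset.single_le_sum (fun w _ => hsR w) (Finset.mem_univ w)
    rw [← hSR] at h1
    have h2 := hp.1 w
    have h3 := (Real.abs_le_sqrt (le_add_of_nonneg_right (sq_nonneg (p.2.1 w - (B.ctrR w).2)) :
      (p.1.1 w - (B.ctrR w).1) ^ 2 ≤ _)).trans h2
    have h4 := (Real.abs_le_sqrt (le_add_of_nonneg_left (sq_nonneg (p.1.1 w - (B.ctrR w).1)) :
      (p.2.1 w - (B.ctrR w).2) ^ 2 ≤ _)).trans h2
    have h5 := abs_sub_abs_le_abs_sub (p.1.1 w) (B.ctrR w).1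
    have h6 := abs_sub_abs_le_abs_sub (p.2.1 w) (B.ctrR w).2
    have h7 := abs_nonneg (B.ctrR w).1
    have h8 := abs_nonneg (B.ctrR w).2
    rw [Real.norm_eq_abs, Real.norm_eq_abs]
    constructor <;> linarith
  · have h1 := Finset.single_le_sum (fun w _ => hsC w) (Finset.mem_univ w)
    rw [← hSC] at h1
    have h2 := hp.2 w
    have h3 := (Real.le_sqrt_of_sq_le (le_add_of_nonneg_right
      (sq_nonneg ‖p.2.2 w - (B.ctrC w).2‖) : ‖p.1.2 w - (B.ctrC w).1‖ ^ 2 ≤ _)).trans h2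
    have h4 := (Real.le_sqrt_of_sq_le (le_add_of_nonneg_left
      (sq_nonneg ‖p.1.2 w - (B.ctrC w).1‖) : ‖p.2.2 w - (B.ctrC w).2‖ ^ 2 ≤ _)).trans h2
    have h5 := norm_sub_norm_le (p.1.2 w) (B.ctrC w).1
    have h6 := norm_sub_norm_le (p.2.2 w) (B.ctrC w).2
    have h7 := norm_nonneg (B.ctrC w).1
    have h8 := norm_nonneg (B.ctrC w).2
    constructor <;> linarith

theorem BoxData.exists_bound_smul (B : BoxData K) : ∃ C0 : ℝ, 1 ≤ C0 ∧ ∀ l : ℝ, 0 ≤ l →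
    ∀ p ∈ l • B.D,
    (∀ w, ‖p.1.1 w‖ ≤ C0 * l ∧ ‖p.2.1 w‖ ≤ C0 * l) ∧
      ∀ w, ‖p.1.2 w‖ ≤ C0 * l ∧ ‖p.2.2 w‖ ≤ C0 * l := by
  obtain ⟨C0, h0, h⟩ := B.exists_bound
  refine ⟨C0, h0, fun l hl p hp => ?_⟩
  obtain ⟨q, hq, rfl⟩ := Set.mem_smul_set.1 hp
  obtain ⟨h1, h2⟩ := h q hq
  refine ⟨fun w => ⟨?_, ?_⟩, fun w => ⟨?_, ?_⟩⟩
  · simp only [Prod.smul_fst, Pi.smul_apply, norm_smul, Real.norm_of_nonneg hl]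
    rw [mul_comm]; exact mul_le_mul_of_nonneg_right (h1 w).1 hl
  · simp only [Prod.smul_fst, Prod.smul_snd, Pi.smul_apply, norm_smul, Real.norm_of_nonneg hl]
    rw [mul_comm]; exact mul_le_mul_of_nonneg_right (h1 w).2 hl
  · simp only [Prod.smul_fst, Prod.smul_snd, Pi.smul_apply, norm_smul, Real.norm_of_nonneg hl]
    rw [mul_comm]; exact mul_le_mul_of_nonneg_right (h2 w).1 hl
  · simp only [Prod.smul_snd, Pi.smul_apply, norm_smul, Real.norm_of_nonneg hl]
    rw [mul_comm]; exact mul_le_mul_of_nonneg_right (h2 w).2 hl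

theorem measurableSet_localRegion {E : Type*} [NormedField E] [MeasurableSpace E] [BorelSpace E]
    [SecondCountableTopology E] (F : E × E → E) (hF : Measurable F) (R : ℝ) :
    MeasurableSet (localRegion F R) :=
  (measurableSet_le measurable_fst.norm measurable_const).inter
    ((measurableSet_le measurable_snd.norm measurable_const).inter
      (measurableSet_le measurable_const hF.norm))

/-- The points of `K_∞ × K_∞` with coordinates bounded by `R` at which `F` has absolute value at least
`1` at every archimedean place. -/
def globalRegion (F : MvPolynomial (Fin 2) (𝓞 K)) (R : ℝ) : Set (KInfty K × KInfty K) :=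
  {p | (∀ w, (p.1.1 w, p.2.1 w) ∈ localRegion (fun q => realEvalForm K F w q.1 q.2) R) ∧
    ∀ w, (p.1.2 w, p.2.2 w) ∈ localRegion (fun q => complexEvalForm K F w q.1 q.2) R}

/-- The volume of a shell `a ≤ 𝔑(F(s,t)) ≤ b` inside the truncated box of size `R`. -/
theorem global_shell_bound
    {F : MvPolynomial (Fin 2) (𝓞 K)} {d : ℕ} (hF : F.IsHomogeneous d)
    (hd : 0 < d) (h : MvPolynomial.eval ![1, 0] F ≠ 0)
    (hirr : Irreducible (F.map (algebraMap (𝓞 K) K)))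
    (η : ℝ) (hη0 : 0 < η) (hη1 : d * η < 1) :
    ∃ C : ℝ, 0 < C ∧ ∀ R : ℝ, 1 ≤ R → ∀ a b : ℝ, 0 < a → a ≤ b →
      volume {p : KInfty K × KInfty K | p ∈ globalRegion F R ∧
        a ≤ normInfty K (evalAtPlaces K F p.1 p.2) ∧
        normInfty K (evalAtPlaces K F p.1 p.2) ≤ b} ≤
      ENNReal.ofReal (C * R ^ (Module.finrank ℚ K * lossExp d η) *
        ((b - a) * a ^ (shellExp d - 1))) := by
  have hR := fun w : {w : InfinitePlace K // w.IsReal} =>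
    local_bounds (volume : Measure ℝ) hdet_real Complex.ofRealHom (by simp) Complex.re
      (fun x z => by
        have := Complex.abs_re_le_norm ((x : ℂ) - z)
        simpa using this) hF hd h hirr (embedding_of_isReal w.2) η hη0 hη1
  have hC := fun w : {w : InfinitePlace K // w.IsComplex} =>
    local_bounds (volume : Measure ℂ) hdet_complex (RingHom.id ℂ) (by simp) id
      (fun x z => le_rfl) hF hd h hirr w.1.embedding η hη0 hη1
  choose CR hCR0 hCR using hR
  choose CC hCC0 hCC using hC
  set SR := 1 + ∑ w, CR w with hSR
  set SC := 1 + ∑ w, CC w with hSC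
  have hSR0 : 0 < SR := by
    have := Finset.sum_nonneg fun w (_ : w ∈ Finset.univ) => (hCR0 w).le
    linarith
  have hSC0 : 0 < SC := by
    have := Finset.sum_nonneg fun w (_ : w ∈ Finset.univ) => (hCC0 w).le
    linarith
  have hleR : ∀ w, CR w ≤ SR := fun w => by
    have := Finset.single_le_sum (fun w _ => (hCR0 w).le) (Finset.mem_univ w)
    linarith
  have hleC : ∀ w, CC w ≤ SC := fun w => by
    have := Finset.single_le_sum (fun w _ => (hCC0 w).le) (Finset.mem_univ w)
    linarith
  refine ⟨SR ^ nrRealPlaces K * SC ^ nrComplexPlaces K, by positivity, fun R hR a b ha hab => ?_⟩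
  have hR0 : 0 < R := by linarith
  have hne : Nonempty {w : InfinitePlace K // w.IsReal} ∨
      Nonempty {w : InfinitePlace K // w.IsComplex} := by
    obtain ⟨w⟩ : Nonempty (InfinitePlace K) := inferInstance
    rcases w.isReal_or_isComplex with hw | hw
    · exact Or.inl ⟨⟨w, hw⟩⟩
    · exact Or.inr ⟨⟨w, hw⟩⟩
  have hmR : ∀ w, Measurable fun q : ℝ × ℝ => realEvalForm K F w q.1 q.2 :=
    fun w => measurable_form _
  have hmC : ∀ w, Measurable fun q : ℂ × ℂ => complexEvalForm K F w q.1 q.2 :=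
    fun w => measurable_form _
  set e := lossExp d η with he
  have hleR' : ∀ w, CR w * R ^ (Module.finrank ℝ ℝ * e) ≤ SR * R ^ (Module.finrank ℝ ℝ * e) :=
    fun w => by have := hleR w; gcongr
  have hleC' : ∀ w, CC w * R ^ (Module.finrank ℝ ℂ * e) ≤ SC * R ^ (Module.finrank ℝ ℂ * e) :=
    fun w => by have := hleC w; gcongr
  have key := shell_volume hne
    (fun w q => ‖realEvalForm K F w q.1 q.2‖ ^ Module.finrank ℝ ℝ)
    (fun w q => ‖complexEvalForm K F w q.1 q.2‖ ^ Module.finrank ℝ ℂ)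
    (fun w => (hmR w).norm.pow_const _) (fun w => (hmC w).norm.pow_const _)
    (fun w q => by positivity) (fun w q => by positivity)
    (fun w => localRegion (fun q => realEvalForm K F w q.1 q.2) R)
    (fun w => localRegion (fun q => complexEvalForm K F w q.1 q.2) R)
    (fun w => measurableSet_localRegion _ (hmR w) R)
    (fun w => measurableSet_localRegion _ (hmC w) R)
    (shellExp d) (SR * R ^ (Module.finrank ℝ ℝ * e)) (SC * R ^ (Module.finrank ℝ ℂ * e))
    (mul_nonneg hSR0.le (Real.rpow_nonneg hR0.le _))
    (mul_nonneg hSC0.le (Real.rpow_nonneg hR0.le _))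
    (fun w => (hCR w R hR).1.mono (hleR' w)) (fun w => (hCR w R hR).2.mono (hleR' w))
    (fun w => (hCC w R hR).1.mono (hleC' w)) (fun w => (hCC w R hR).2.mono (hleC' w)) a b ha hab
  have hexp : (SR * R ^ (Module.finrank ℝ ℝ * e)) ^ nrRealPlaces K *
      (SC * R ^ (Module.finrank ℝ ℂ * e)) ^ nrComplexPlaces K =
      SR ^ nrRealPlaces K * SC ^ nrComplexPlaces K * R ^ (Module.finrank ℚ K * e) := by
    rw [mul_pow, mul_pow, ← Real.rpow_natCast (R ^ _), ← Real.rpow_natCast (R ^ _),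
      ← Real.rpow_mul hR0.le, ← Real.rpow_mul hR0.le, ← card_add_two_mul_card_eq_rank K,
      mul_mul_mul_comm, ← Real.rpow_add hR0, Complex.finrank_real_complex, Module.finrank_self]
    congr 2
    push_cast
    ring
  rw [show Fintype.card {w : InfinitePlace K // w.IsReal} = nrRealPlaces K from rfl,
    show Fintype.card {w : InfinitePlace K // w.IsComplex} = nrComplexPlaces K from rfl,
    hexp] at key
  refine le_trans (le_of_eq ?_) key
  congr 1
  ext p
  simp [globalRegion, normInfty, evalAtPlaces, Complex.finrank_real_complex]

end Final

/-! ### Monotonicity and the difference bound -/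

/-- **Lemma 4.11 (monotonicity and difference bounds for `ω*_ψ`).** Let `ψ ∈ {0,1}^n`,
`1 ≤ i ≤ n` and `v ∈ ℝ^n` with `v_j ≥ 0` for `j ≠ i`. Then `ω*_ψ(X;v)` is non-increasing
as a function of `v_i`, and for every `ε > 0`, uniformly for `1 ≤ v_i ≤ √Y_i` and `X ≥ 1`,
`|Δ_i ω*_ψ(X;v)| ≪ X^{1+ε} X^{1/2}` if `d_i = 1` and
`|Δ_i ω*_ψ(X;v)| ≪ X^{1+ε} v_i^{2/d_i−1}` if `d_i ≥ 2`. -/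
theorem omegaStar_monotone_and_difference_bound
    (K : Type*) [Field K] [NumberField K]
    (𝔯 : Ideal (𝓞 K)) (h𝔯 : 𝔯 ≠ ⊥)
    (n : ℕ) (S : SystemOfForms K n)
    (hnot_t : ∀ j, evalForm K (S.F j) 1 0 ≠ 0)
    (P : Triplet K 𝔯) (hP : StronglyAdmissible K S P)
    (c : Fin n → ℝ) (hc : ∀ i, 0 < c i)
    (hY : ∀ X : ℝ, 1 < X → ∀ p ∈ Mstar K P X, ∀ i,
      (Ideal.absNorm (Ideal.span {evalForm K (S.F i) p.1 p.2}) : ℝ) /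
          (Ideal.absNorm (coflatPart K P.w
            (Ideal.span {evalForm K (S.F i) P.σ P.τ})) : ℝ)
        < c i * X ^ (S.dF i))
    (Hr : {w : InfinitePlace K // w.IsReal} → Finset (MvPolynomial (Fin 2) ℝ))
    (Hc : {w : InfinitePlace K // w.IsComplex} → Finset (MvPolynomial (Fin 2) ℂ))
    (hHr0 : ∀ w, MvPolynomial.X 0 ∈ Hr w ∧ MvPolynomial.X 1 ∈ Hr w)
    (hHc0 : ∀ w, MvPolynomial.X 0 ∈ Hc w ∧ MvPolynomial.X 1 ∈ Hc w)
    (hHrF : ∀ w, ∀ j, (S.F j).map (realEmbed K w) ∈ Hr w)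
    (hHcF : ∀ w, ∀ j, (S.F j).map (complexEmbed K w) ∈ Hc w)
    (hHr2 : ∀ w, ∀ j, S.dF j = 2 → ¬ Irreducible ((S.F j).map (realEmbed K w)) →
      ∃ G H' : MvPolynomial (Fin 2) ℝ, G ∈ Hr w ∧ H' ∈ Hr w ∧
        G.IsHomogeneous 1 ∧ H'.IsHomogeneous 1 ∧ G * H' = (S.F j).map (realEmbed K w))
    (hHc2 : ∀ w, ∀ j, S.dF j = 2 →
      ∃ G H' : MvPolynomial (Fin 2) ℂ, G ∈ Hc w ∧ H' ∈ Hc w ∧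
        G.IsHomogeneous 1 ∧ H'.IsHomogeneous 1 ∧ G * H' = (S.F j).map (complexEmbed K w))
    (hHsep : (∀ w, ∀ H ∈ Hr w, ∃ e : ℕ, 1 ≤ e ∧ H.IsHomogeneous e ∧ Squarefree H) ∧
      (∀ w, ∀ H ∈ Hc w, ∃ e : ℕ, 1 ≤ e ∧ H.IsHomogeneous e ∧ Squarefree H))
    (i : Fin n) :
    (∀ ψ : Fin n → Bool, ∀ X : ℝ, 1 ≤ X → ∀ v : Fin n → ℝ,
      (∀ j, j ≠ i → 0 ≤ v j) → ∀ a b : ℝ, a ≤ b →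
        omegaStar K S P Hr Hc c ψ X (Function.update v i b) ≤
          omegaStar K S P Hr Hc c ψ X (Function.update v i a)) ∧
    ∀ ε : ℝ, 0 < ε → ∃ C : ℝ, 0 < C ∧
      ∀ ψ : Fin n → Bool, ∀ X : ℝ, 1 ≤ X → ∀ v : Fin n → ℝ,
        (∀ j, j ≠ i → 0 ≤ v j) → 1 ≤ v i →
        v i ≤ Real.sqrt (c i * X ^ (S.dF i)) →
          |omegaStar K S P Hr Hc c ψ X (Function.update v i (v i + 1)) -
              omegaStar K S P Hr Hc c ψ X v|
            ≤ C * X ^ (1 + ε) *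
                (if S.dF i = 1 then X ^ ((1 : ℝ) / 2)
                 else v i ^ (2 / (S.dF i : ℝ) - 1)) := by
  classical
  set B : ℝ → ℝ := fun X => Real.sqrt (c i * X ^ (S.dF i)) * (Ideal.absNorm (coflatPart K P.w
    (Ideal.span {evalForm K (S.F i) P.σ P.τ})) : ℝ) with hBdef
  have hB0 : ∀ X, 0 ≤ B X := fun X => by positivity
  -- `A ψ X v` is the region of which `omegaStar` is the volume
  set A : (Fin n → Bool) → ℝ → (Fin n → ℝ) → Set (KInfty K × KInfty K) := fun ψ X v =>
    {p : KInfty K × KInfty K |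
      p ∈ (X ^ ((1 : ℝ) / (Module.finrank ℚ K))) • P.box.D ∧
      (∀ i, (if ψ i then
          v i * Real.sqrt (c i * X ^ (S.dF i)) *
            (Ideal.absNorm (coflatPart K P.w
              (Ideal.span {evalForm K (S.F i) P.σ P.τ})) : ℝ)
        else 0) ≤ normInfty K (evalAtPlaces K (S.F i) p.1 p.2)) ∧
      (∀ w, ∀ H ∈ Hr w, 1 ≤ |MvPolynomial.eval ![p.1.1 w, p.2.1 w] H|) ∧
      (∀ w, ∀ H ∈ Hc w, 1 ≤ ‖MvPolynomial.eval ![p.1.2 w, p.2.2 w] H‖)} with hA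
  have hω : ∀ ψ X v, omegaStar K S P Hr Hc c ψ X v = (volume (A ψ X v)).toReal :=
    fun ψ X v => rfl
  obtain ⟨C0, hC0, hbox⟩ := P.box.exists_bound_smul
  have hfin : ∀ ψ X v, 1 ≤ X → volume (A ψ X v) < ⊤ := by
    intro ψ X v hX
    refine (Metric.isBounded_closedBall (x := (0 : KInfty K × KInfty K))
      (r := C0 * X ^ ((1 : ℝ) / (Module.finrank ℚ K)))).subset (fun p hp => ?_) |>.measure_lt_top
    have hl : 0 ≤ X ^ ((1 : ℝ) / (Module.finrank ℚ K)) := by positivity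
    obtain ⟨h1, h2⟩ := hbox _ hl p hp.1
    have hr : 0 ≤ C0 * X ^ ((1 : ℝ) / (Module.finrank ℚ K)) := by positivity
    rw [mem_closedBall_zero_iff, Prod.norm_def, Prod.norm_def, Prod.norm_def]
    exact max_le
      (max_le ((pi_norm_le_iff_of_nonneg hr).2 fun w => (h1 w).1)
        ((pi_norm_le_iff_of_nonneg hr).2 fun w => (h2 w).1))
      (max_le ((pi_norm_le_iff_of_nonneg hr).2 fun w => (h1 w).2)
        ((pi_norm_le_iff_of_nonneg hr).2 fun w => (h2 w).2))
  have hsub : ∀ ψ X v a b, a ≤ b →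
      A ψ X (Function.update v i b) ⊆ A ψ X (Function.update v i a) := by
    rintro ψ X v a b hab p ⟨h1, h2, h3⟩
    refine ⟨h1, fun j => le_trans ?_ (h2 j), h3⟩
    by_cases hj : j = i
    · subst hj
      simp only [Function.update_self]
      split_ifs
      · gcongr
      · exact le_rfl
    · simp only [Function.update_of_ne hj]
      exact le_rfl
  have hmono : ∀ ψ : Fin n → Bool, ∀ X : ℝ, 1 ≤ X → ∀ v : Fin n → ℝ, ∀ a b : ℝ, a ≤ b →
      omegaStar K S P Hr Hc c ψ X (Function.update v i b) ≤
        omegaStar K S P Hr Hc c ψ X (Function.update v i a) := by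
    intro ψ X hX v a b hab
    rw [hω, hω]
    exact ENNReal.toReal_mono (hfin ψ X _ hX).ne (measure_mono (hsub ψ X v a b hab))
  refine ⟨fun ψ X hX v _ a b hab => hmono ψ X hX v a b hab, fun ε hε => ?_⟩
  set d := S.dF i with hd
  have hd0 : 0 < d := S.dF_pos i
  have hd0' : (0:ℝ) < d := by exact_mod_cast hd0
  set δ : ℝ := min ε (1 / 2) with hδ
  have hδ0 : 0 < δ := by positivity
  have hδε : δ ≤ ε := min_le_left _ _
  have hδ2 : δ ≤ 1 / 2 := min_le_right _ _
  set η : ℝ := δ / d with hη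
  have hη0 : 0 < η := by positivity
  have hdη : d * η = δ := by rw [hη]; field_simp
  obtain ⟨C1, hC1, hshell⟩ := global_shell_bound (S.F_homog i) hd0 (hnot_t i) (S.F_irred i) η hη0
    (by rw [← hd, hdη]; linarith)
  rw [← hd] at hshell
  set m : ℕ := Module.finrank ℚ K with hm
  have hm0 : (m:ℝ) ≠ 0 := by exact_mod_cast (Module.finrank_pos : 0 < Module.finrank ℚ K).ne'
  set e := lossExp d η with he
  set κ := shellExp d with hκ
  set b0 : ℝ := Real.sqrt (c i) * (Ideal.absNorm (coflatPart K P.w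
    (Ideal.span {evalForm K (S.F i) P.σ P.τ})) : ℝ) with hb0
  have hb00 : 0 ≤ b0 := by positivity
  set C2 : ℝ := C1 * C0 ^ (m * e) * b0 ^ κ with hC2
  have hC20 : 0 ≤ C2 := by positivity
  refine ⟨C2 + 1, by positivity, fun ψ X hX v _ hv1 _ => ?_⟩
  have hX0 : 0 < X := by linarith
  have hBX : B X = b0 * X ^ ((d:ℝ) / 2) := by
    simp only [hBdef, hb0]
    rw [Real.sqrt_mul (hc i).le, Real.sqrt_eq_rpow (X ^ d), ← Real.rpow_natCast,
      ← Real.rpow_mul hX0.le, mul_one_div]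
    ring
  set l : ℝ := X ^ ((1 : ℝ) / m) with hl
  have hl1 : 1 ≤ l := Real.one_le_rpow hX (by positivity)
  set R : ℝ := C0 * l with hR
  have hR1 : 1 ≤ R := one_le_mul_of_one_le_of_one_le hC0 hl1
  have hRe : R ^ (m * e) = C0 ^ (m * e) * X ^ e := by
    rw [hR, Real.mul_rpow (by linarith) (by linarith), hl, ← Real.rpow_mul hX0.le]
    congr 2
    field_simp
  have hv0 : 0 < v i := by linarith
  set E : ℝ := C2 * X ^ (e + d / 2 * κ) * v i ^ (κ - 1) with hE
  have hE0 : 0 ≤ E := by positivity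
  have hEle : E ≤ (C2 + 1) * X ^ (1 + ε) *
      (if d = 1 then X ^ ((1 : ℝ) / 2) else v i ^ (2 / (d : ℝ) - 1)) := by
    by_cases h1 : d = 1
    · rw [if_pos h1]
      have hκ1 : κ = 1 := by rw [hκ, shellExp, if_pos h1]
      have hηδ : η = δ := by rw [← hdη, h1]; simp
      rw [hE, hκ1, sub_self, Real.rpow_zero, mul_one, mul_assoc (C2 + 1), ← Real.rpow_add hX0]
      have : e + d / 2 * 1 ≤ 1 + ε + 1 / 2 := by
        rw [he, lossExp, if_pos h1, h1, hηδ]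
        push_cast
        linarith
      gcongr
      linarith
    · rw [if_neg h1]
      have hκ1 : κ = 2 / d := by rw [hκ, shellExp, if_neg h1]
      rw [hE, hκ1]
      have : e + d / 2 * (2 / d) ≤ 1 + ε := by
        rw [he, lossExp, if_neg h1, hdη]
        have : (d:ℝ) / 2 * (2 / d) = 1 := by field_simp
        linarith
      gcongr
      linarith
  refine le_trans ?_ hEle
  have hupd : Function.update v i (v i) = v := Function.update_eq_self i v
  -- a point lost when `v i` increases by one lies in the shell `v i * B ≤ 𝔑 ≤ v i * B + B`
  have hcover : A ψ X v ⊆ A ψ X (Function.update v i (v i + 1)) ∪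
      {p | 0 < B X ∧ p ∈ globalRegion (S.F i) R ∧
        v i * B X ≤ normInfty K (evalAtPlaces K (S.F i) p.1 p.2) ∧
        normInfty K (evalAtPlaces K (S.F i) p.1 p.2) ≤ v i * B X + B X} := by
    intro p hp
    by_cases hq : p ∈ A ψ X (Function.update v i (v i + 1))
    · exact Or.inl hq
    right
    obtain ⟨h1, h2, h3, h4⟩ := hp
    have hψ : ψ i = true ∧
        normInfty K (evalAtPlaces K (S.F i) p.1 p.2) < (v i + 1) * B X := by
      by_contra hcon
      refine hq ⟨h1, fun j => ?_, h3, h4⟩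
      by_cases hj : j = i
      · subst hj
        simp only [Function.update_self]
        by_cases hψj : ψ j = true
        · rw [if_pos hψj]
          by_contra hlt
          refine hcon ⟨hψj, ?_⟩
          rw [not_le, mul_assoc] at hlt
          exact hlt
        · rw [if_neg hψj]
          have := h2 j
          rwa [if_neg hψj] at this
      · simp only [Function.update_of_ne hj]
        exact h2 j
    have hlow : v i * B X ≤ normInfty K (evalAtPlaces K (S.F i) p.1 p.2) := by
      have := h2 i
      rwa [if_pos hψ.1, mul_assoc] at this
    refine ⟨?_, ⟨fun w => ?_, fun w => ?_⟩, hlow, by linarith [hψ.2]⟩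
    · nlinarith [hψ.2, hlow]
    · obtain ⟨g1, g2⟩ := (hbox l (by linarith) p h1).1 w
      exact ⟨g1, g2, h3 w _ (hHrF w i)⟩
    · obtain ⟨g1, g2⟩ := (hbox l (by linarith) p h1).2 w
      exact ⟨g1, g2, h4 w _ (hHcF w i)⟩
  have hshell' : volume {p | 0 < B X ∧ p ∈ globalRegion (S.F i) R ∧
        v i * B X ≤ normInfty K (evalAtPlaces K (S.F i) p.1 p.2) ∧
        normInfty K (evalAtPlaces K (S.F i) p.1 p.2) ≤ v i * B X + B X} ≤ ENNReal.ofReal E := by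
    -- `B X = 0` would need a vanishing ideal norm; then no point is lost at all
    rcases (hB0 X).eq_or_lt with h0 | hpos
    · simp [← h0]
    · simp only [hpos, true_and]
      refine (hshell R hR1 (v i * B X) (v i * B X + B X) (by positivity) (by linarith)).trans
        (ENNReal.ofReal_le_ofReal (le_of_eq ?_))
      have hBκ : B X * B X ^ (κ - 1) = b0 ^ κ * X ^ (d / 2 * κ) := by
        rw [← Real.rpow_one_add' hpos.le (by
          have : 0 < κ := by rw [hκ, shellExp]; split_ifs <;> positivity
          linarith), add_sub_cancel, hBX, Real.mul_rpow hb00 (by positivity),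
          ← Real.rpow_mul hX0.le]
      rw [add_sub_cancel_left, Real.mul_rpow hv0.le hpos.le, hRe, hE, hC2, Real.rpow_add hX0]
      linear_combination (C1 * (C0 ^ (m * e) * X ^ e) * v i ^ (κ - 1)) * hBκ
  have hle : omegaStar K S P Hr Hc c ψ X (Function.update v i (v i + 1)) ≤
      omegaStar K S P Hr Hc c ψ X v := by
    conv_rhs => rw [← hupd]
    exact hmono ψ X hX v _ _ (by linarith)
  rw [abs_sub_comm, abs_of_nonneg (sub_nonneg.2 hle), sub_le_iff_le_add', hω, hω]
  have hf := (hfin ψ X (Function.update v i (v i + 1)) hX).ne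
  rw [← ENNReal.toReal_ofReal hE0, ← ENNReal.toReal_add hf ENNReal.ofReal_ne_top]
  refine ENNReal.toReal_mono (ENNReal.add_ne_top.2 ⟨hf, ENNReal.ofReal_ne_top⟩) ?_
  exact (measure_mono hcover).trans ((measure_union_le _ _).trans (by gcongr))
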